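/- Let F⃗ be an acyclic oriented graph with m₂(F⃗) > 1 and let 0 < γ < 1. Then there exists a constant B ≥ 1 such that, with p = p(n) = B·n^{−(1−γ)/m₂(F⃗)}, a.a.s. the random graph G = G(n,p) has the property that G[W] → F⃗ for every vertex subset W ⊆ V(G) with |W| ≥ n^{1−γ}. -/

import Mathlib

open Classical in
/-- The probability that the binomial random graph `G(n,p)` satisfies the property `Q`. -/
noncomputable def probGnp (n : ℕ) (p : ℝ) (Q : SimpleGraph (Fin n) → Prop) : ℝ :=
  ∑ G : SimpleGraph (Fin n),
    if Q G then p ^ G.edgeSet.ncard * (1 - p) ^ (n.choose 2 - G.edgeSet.ncard) else 0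
/-- `o` is an orientation of the simple graph `G`: every edge of `G` is assigned
exactly one direction, and there are no other arcs. -/
def IsOrientation {α : Type*} (G : SimpleGraph α) (o : α → α → Prop) : Prop :=
  (∀ u v, o u v → G.Adj u v) ∧ ∀ u v, G.Adj u v → (o u v ↔ ¬ o v u)

/-- The digraph `o` contains a (not necessarily induced) copy of the oriented graph `H`
as a subdigraph. -/
def HasCopy {α β : Type*} (o : α → α → Prop) (H : β → β → Prop) : Prop :=
  ∃ f : β → α, Function.Injective f ∧ ∀ a b, H a b → o (f a) (f b)

/-- `G → H⃗`: every orientation of `G` contains a copy of `H`. -/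
def Arrows {α β : Type*} (G : SimpleGraph α) (H : β → β → Prop) : Prop :=
  ∀ o : α → α → Prop, IsOrientation G o → HasCopy o H
/-- The 2-density associated to a (sub)graph with `v` vertices and `e` edges:
`(e-1)/(v-2)` if `v ≥ 3`, `1/2` for a single edge, and `0` otherwise. -/
noncomputable def d2 (v e : ℕ) : ℝ :=
  if 3 ≤ v then (e - 1 : ℝ) / (v - 2 : ℝ) else if e = 1 then 1 / 2 else 0

/-- The maximum 2-density `m₂(H)` of a finite simple graph `H`. -/
noncomputable def m2 {α : Type*} [Fintype α] (H : SimpleGraph α) : ℝ :=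
  sSup {x : ℝ | ∃ J : H.Subgraph, x = d2 J.verts.ncard J.edgeSet.ncard}

/-- The maximum 2-density of an oriented graph: that of its underlying graph. -/
noncomputable def m2Rel {β : Type*} [Fintype β] (H : β → β → Prop) : ℝ :=
  m2 (SimpleGraph.fromRel H)
/-- A digraph is acyclic if it has no directed cycles, i.e. the transitive closure
of its arc relation is irreflexive. -/
def RelAcyclic {β : Type*} (H : β → β → Prop) : Prop :=
  Irreflexive (Relation.TransGen H)


set_option linter.unusedSectionVars false

namespace HC

variable {V : Type*} [Fintype V] [DecidableEq V]

/-- Weight of a set in the `p`-random subset model. -/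
noncomputable def wt (p : ℝ) (R : Finset V) : ℝ :=
  p ^ R.card * (1 - p) ^ (Fintype.card V - R.card)

lemma wt_nonneg {p : ℝ} (h0 : 0 ≤ p) (h1 : p ≤ 1) (R : Finset V) : 0 ≤ wt p R := by
  unfold wt
  have : 0 ≤ 1 - p := by linarith
  positivity

lemma sum_wt (p : ℝ) : ∑ R : Finset V, wt p R = 1 := by
  have := Finset.sum_pow_mul_eq_add_pow p (1 - p) (Finset.univ : Finset V)
  simpa [wt] using this

lemma wt_add_insert (p : ℝ) {v : V} {t : Finset V} (hv : v ∉ t) :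
    p * (wt p t + wt p (insert v t)) = wt p (insert v t) := by
  unfold wt
  have h : (insert v t).card = t.card + 1 := Finset.card_insert_of_notMem hv
  have h2 : (insert v t).card ≤ Fintype.card V := Finset.card_le_univ _
  obtain ⟨k, hk⟩ : ∃ k, Fintype.card V = t.card + 1 + k := ⟨_, (Nat.add_sub_cancel' (h ▸ h2)).symm⟩
  rw [h, hk]
  have e1 : t.card + 1 + k - t.card = k + 1 := by omega
  have e2 : t.card + 1 + k - (t.card + 1) = k := by omega
  rw [e1, e2]
  ring

lemma sum_mem_one (p : ℝ) (v : V) (g : Finset V → ℝ) :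
    ∑ R : Finset V, (if v ∈ R then wt p R * g R else 0) =
      p * ∑ R : Finset V, wt p R * g (insert v R) := by
  have huniv : (Finset.univ : Finset (Finset V)) =
      (insert v (Finset.univ.erase v : Finset V)).powerset := by
    rw [Finset.insert_erase (Finset.mem_univ v), Finset.powerset_univ]
  rw [huniv, Finset.sum_powerset_insert (Finset.notMem_erase v _),
    Finset.sum_powerset_insert (Finset.notMem_erase v _), ← Finset.sum_add_distrib,
    ← Finset.sum_add_distrib, Finset.mul_sum]
  refine Finset.sum_congr rfl fun t ht => ?_
  have hv : v ∉ t := fun h => by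
    have := Finset.mem_powerset.1 ht h
    simp at this
  have := wt_add_insert p hv
  simp only [hv, if_false, Finset.mem_insert_self, if_true, Finset.insert_idem]
  rw [← add_mul, ← mul_assoc, this, zero_add]

lemma sum_supset (p : ℝ) (L : Finset V) : ∀ (g : Finset V → ℝ),
    ∑ R : Finset V, (if L ⊆ R then wt p R * g R else 0) =
      p ^ L.card * ∑ R : Finset V, wt p R * g (R ∪ L) := by
  induction L using Finset.induction_on with
  | empty => intro g; simp
  | insert v L hv ih =>
    intro g
    have h1 := ih (fun R => if v ∈ R then g R else 0)
    have h2 := sum_mem_one p v (fun R => g (R ∪ L))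
    rw [Finset.card_insert_of_notMem hv, pow_succ, mul_assoc]
    have h3 : ∀ R : Finset V, R ∪ insert v L = insert v R ∪ L := by
      intro R; ext x; simp
    simp only [h3]
    rw [← h2]
    have h4 : ∀ R : Finset V, wt p R * (if v ∈ R ∪ L then g (R ∪ L) else 0) =
        if v ∈ R then wt p R * g (R ∪ L) else 0 := by
      intro R; simp [hv]
    simp only [h4] at h1
    rw [← h1]
    refine Finset.sum_congr rfl fun R _ => ?_
    simp only [Finset.insert_subset_iff]
    by_cases a : v ∈ R <;> by_cases b : L ⊆ R <;> simp [a, b]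

lemma wt_compl (p : ℝ) (R : Finset V) : wt p Rᶜ = wt (1 - p) R := by
  unfold wt
  rw [Finset.card_compl]
  have h2 : R.card ≤ Fintype.card V := Finset.card_le_univ _
  rw [Nat.sub_sub_self h2, sub_sub_cancel, mul_comm]

lemma sum_disj (p : ℝ) (T : Finset V) :
    ∑ R : Finset V, (if Disjoint T R then wt p R else 0) = (1 - p) ^ T.card := by
  have h := sum_supset (1 - p) T (fun _ => 1)
  simp only [mul_one, sum_wt] at h
  rw [← h]
  refine Fintype.sum_equiv (Equiv.ofBijective _ compl_bijective) _ _ fun R => ?_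
  have : T ⊆ Rᶜ ↔ Disjoint T R := by
    rw [Finset.subset_compl_iff_disjoint_right]
  simp only [Equiv.ofBijective_apply, this]
  rw [wt_compl, sub_sub_cancel]

lemma sum_supset_disj (p : ℝ) (S T : Finset V) (h : Disjoint S T) :
    ∑ R : Finset V, (if S ⊆ R ∧ Disjoint T R then wt p R else 0) =
      p ^ S.card * (1 - p) ^ T.card := by
  have h1 := sum_supset p S (fun R => if Disjoint T R then 1 else 0)
  rw [← sum_disj]
  have h3 : ∀ R : Finset V, Disjoint T (R ∪ S) ↔ Disjoint T R := by
    intro R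
    rw [Finset.disjoint_union_right]
    exact ⟨fun h => h.1, fun h' => ⟨h', h.symm⟩⟩
  simp only [h3, mul_ite, mul_one, mul_zero] at h1
  rw [← h1]
  refine Finset.sum_congr rfl fun R _ => ?_
  by_cases a : S ⊆ R <;> by_cases b : Disjoint T R <;> simp [a, b]

/-- `R` contains no edge of `G`. -/
def Indep (G : Finset (Finset V)) (R : Finset V) : Prop := ∀ E ∈ G, ¬ E ⊆ R

lemma Indep.mono {G : Finset (Finset V)} {R R' : Finset V} (h : Indep G R) (hs : R' ⊆ R) :
    Indep G R' := fun E hE hE' => h E hE (hE'.trans hs)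

open Classical in
/-- probability that `R ∪ L` is independent -/
noncomputable def ZL (p : ℝ) (G : Finset (Finset V)) (L : Finset V) : ℝ :=
  ∑ R : Finset V, wt p R * (if Indep G (R ∪ L) then 1 else 0)

/-- probability that `R` is independent -/
noncomputable def Z (p : ℝ) (G : Finset (Finset V)) : ℝ := ZL p G ∅

lemma ZL_mono {p : ℝ} (h0 : 0 ≤ p) (h1 : p ≤ 1) (G G' : Finset (Finset V)) (L L' : Finset V)
    (h : ∀ R, Indep G' (R ∪ L') → Indep G (R ∪ L)) : ZL p G' L' ≤ ZL p G L := by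
  unfold ZL
  refine Finset.sum_le_sum fun R _ => mul_le_mul_of_nonneg_left ?_ (wt_nonneg h0 h1 R)
  by_cases a : Indep G' (R ∪ L')
  · simp [a, h R a]
  · simp only [a, if_false]; split_ifs <;> norm_num

lemma Z_lower {p : ℝ} (h0 : 0 ≤ p) (h1 : p ≤ 1) (G : Finset (Finset V)) (h : Indep G ∅) :
    (1 - p) ^ Fintype.card V ≤ Z p G := by
  unfold Z ZL
  have := Finset.single_le_sum (f := fun R : Finset V =>
    wt p R * (@ite _ (Indep G (R ∪ ∅)) (Classical.propDecidable _) (1:ℝ) 0)) (s := Finset.univ)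
    (fun R _ => mul_nonneg (wt_nonneg h0 h1 R) (by split_ifs <;> norm_num)) (Finset.mem_univ ∅)
  refine le_trans (le_of_eq ?_) this
  simp [wt, h]

lemma Z_le_one {p : ℝ} (h0 : 0 ≤ p) (h1 : p ≤ 1) (G : Finset (Finset V)) : Z p G ≤ 1 := by
  unfold Z ZL
  refine le_trans (Finset.sum_le_sum fun R _ => ?_) (sum_wt (V := V) p).le
  have := wt_nonneg h0 h1 R
  split_ifs <;> simp [this]

/-- No small set is dangerous. -/
def Terminal (p : ℝ) (r : ℕ) (G : Finset (Finset V)) : Prop :=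
  ∀ L, L.card ≤ r → Indep G L → 3 / 4 * Z p G ≤ ZL p G L

open Classical in
theorem container_aux {p : ℝ} (h0 : 0 ≤ p) (h1 : p < 1) (r : ℕ) : ∀ (m : ℕ) (G : Finset (Finset V)),
    (Finset.univ.filter (Indep G)).card = m → (∀ E ∈ G, E.card ≤ r) →
    ∃ f : Finset V → Finset (Finset V), ∀ I, Indep G I →
      ∃ S ⊆ I, ∃ k : ℕ, S.card ≤ r * k ∧ (1 - p) ^ Fintype.card V ≤ (3 / 4) ^ k * Z p G ∧
        ∀ T, S ⊆ T → T ⊆ I → Terminal p r (f T) ∧ G ⊆ f T ∧ (∀ E ∈ f T, E.card ≤ r) ∧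
          Indep (f T) I := by
  intro m
  induction m using Nat.strong_induction_on with
  | _ m ih =>
  intro G hm hr
  by_cases ht : Terminal p r G
  · refine ⟨fun _ => G, fun I hI => ⟨∅, by simp, 0, by simp, ?_, fun T _ _ =>
      ⟨ht, Finset.Subset.refl _, hr, hI⟩⟩⟩
    have := Z_lower h0 h1.le G (hI.mono (by simp))
    simpa using this
  · unfold Terminal at ht
    push Not at ht
    obtain ⟨L, hLr, hL, hlt⟩ := ht
    set Gy : Finset (Finset V) := G ∪ G.image (fun E => E \ L) with hGy
    set Gn : Finset (Finset V) := insert L G with hGn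
    have hyI : ∀ R, Indep Gy R ↔ Indep G (R ∪ L) := by
      intro R
      constructor
      · intro h E hE hs
        refine h (E \ L) ?_ ?_
        · simp only [hGy, Finset.mem_union, Finset.mem_image]
          exact Or.inr ⟨E, hE, rfl⟩
        · intro x hx
          have := hs (Finset.mem_sdiff.1 hx).1
          simpa [(Finset.mem_sdiff.1 hx).2] using this
      · intro h E hE hs
        simp only [hGy, Finset.mem_union, Finset.mem_image] at hE
        rcases hE with hE | ⟨E', hE', rfl⟩
        · exact h E hE (hs.trans Finset.subset_union_left)
        · refine h E' hE' ?_
          intro x hx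
          by_cases hxL : x ∈ L
          · simp [hxL]
          · exact Finset.mem_union_left _ (hs (Finset.mem_sdiff.2 ⟨hx, hxL⟩))
    have hnI : ∀ R, Indep Gn R ↔ Indep G R ∧ ¬ L ⊆ R := by
      intro R
      simp only [Indep, hGn, Finset.mem_insert, forall_eq_or_imp]
      tauto
    have hZy : Z p Gy = ZL p G L := by
      unfold Z ZL
      simp only [Finset.union_empty, hyI]
    have hsuby : (Finset.univ.filter (Indep Gy)) ⊆ (Finset.univ.filter (Indep G)) := by
      intro R hR
      simp only [Finset.mem_filter, Finset.mem_univ, true_and] at hR ⊢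
      exact ((hyI R).1 hR).mono Finset.subset_union_left
    have hZpos : 0 < Z p G := lt_of_lt_of_le (pow_pos (by linarith) _)
        (Z_lower h0 h1.le G (hL.mono (by simp)))
    have hcy : (Finset.univ.filter (Indep Gy)).card < m := by
      rw [← hm]
      refine Finset.card_lt_card (Finset.ssubset_iff_subset_ne.2 ⟨hsuby, fun he => ?_⟩)
      have : Z p Gy = Z p G := by
        unfold Z ZL
        refine Finset.sum_congr rfl fun R _ => ?_
        have : R ∈ Finset.univ.filter (Indep Gy) ↔ R ∈ Finset.univ.filter (Indep G) := by rw [he]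
        simp only [Finset.mem_filter, Finset.mem_univ, true_and] at this
        simp only [Finset.union_empty, this]
      rw [← hZy, this] at hlt
      linarith
    have hcn : (Finset.univ.filter (Indep Gn)).card < m := by
      rw [← hm]
      refine Finset.card_lt_card (Finset.ssubset_iff_of_subset ?_ |>.2 ⟨L, ?_, ?_⟩)
      · intro R hR
        simp only [Finset.mem_filter, Finset.mem_univ, true_and] at hR ⊢
        exact ((hnI R).1 hR).1
      · simpa using hL
      · simp [hnI]
    obtain ⟨fy, hfy⟩ := ih _ hcy Gy rfl (by
      intro E hE
      simp only [hGy, Finset.mem_union, Finset.mem_image] at hE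
      rcases hE with hE | ⟨E', hE', rfl⟩
      · exact hr E hE
      · exact (Finset.card_le_card Finset.sdiff_subset).trans (hr E' hE'))
    obtain ⟨fn, hfn⟩ := ih _ hcn Gn rfl (by
      intro E hE
      simp only [hGn, Finset.mem_insert] at hE
      rcases hE with rfl | hE
      · exact hLr
      · exact hr E hE)
    refine ⟨fun T => if L ⊆ T then fy T else fn T, fun I hI => ?_⟩
    by_cases hLI : L ⊆ I
    · obtain ⟨S, hSI, k, hk, hZ, hT⟩ := hfy I (by
        rw [hyI, Finset.union_eq_left.2 hLI]; exact hI)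
      refine ⟨S ∪ L, Finset.union_subset hSI hLI, k + 1, ?_, ?_, ?_⟩
      · refine (Finset.card_union_le _ _).trans ?_
        rw [mul_add, mul_one]
        omega
      · refine hZ.trans ?_
        rw [hZy, pow_succ, mul_assoc]
        exact mul_le_mul_of_nonneg_left hlt.le (by positivity)
      · intro T hST hTI
        have hLT : L ⊆ T := Finset.subset_union_right.trans hST
        simp only [hLT, if_true]
        obtain ⟨a, b, c, d⟩ := hT T (Finset.subset_union_left.trans hST) hTI
        exact ⟨a, Finset.subset_union_left.trans b, c, d⟩
    · obtain ⟨S, hSI, k, hk, hZ, hT⟩ := hfn I ((hnI I).2 ⟨hI, hLI⟩)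
      refine ⟨S, hSI, k, hk, hZ.trans ?_, ?_⟩
      · refine mul_le_mul_of_nonneg_left ?_ (by positivity)
        unfold Z
        refine ZL_mono h0 h1.le _ _ _ _ fun R hR => ((hnI _).1 hR).1
      · intro T hST hTI
        have hLT : ¬ L ⊆ T := fun h => hLI (h.trans hTI)
        simp only [hLT, if_false]
        obtain ⟨a, b, c, d⟩ := hT T hST hTI
        exact ⟨a, (Finset.subset_insert _ _).trans b, c, d⟩

end HC
set_option linter.unusedSectionVars false

namespace HC

variable {V : Type*} [Fintype V] [DecidableEq V]

open Classical in
lemma moment (p : ℝ) (G : Finset (Finset V)) (L : Finset V) :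
    ∑ R : Finset V, (wt p R * (if Indep G R then 1 else 0)) * (if L ⊆ R then 1 else 0) =
      p ^ L.card * ZL p G L := by
  have h := sum_supset p L (fun R => if Indep G R then 1 else 0)
  unfold ZL
  rw [← h]
  refine Finset.sum_congr rfl fun R _ => ?_
  by_cases a : L ⊆ R <;> simp [a]

/-- Minimal edges. -/
def minE (G : Finset (Finset V)) : Finset (Finset V) :=
  G.filter (fun E => ∀ S ∈ G, S ⊆ E → S = E)

/-- Weighted degree of a set `T` among the minimal edges. -/
noncomputable def wdeg (p : ℝ) (G : Finset (Finset V)) (T : Finset V) : ℝ :=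
  ∑ E ∈ (minE G).filter (fun E => T ⊆ E), p ^ (E \ T).card

lemma minE_sub {G : Finset (Finset V)} {E : Finset V} (h : E ∈ minE G) : E ∈ G :=
  (Finset.mem_filter.1 h).1

lemma exists_minE {G : Finset (Finset V)} : ∀ {E : Finset V}, E ∈ G → ∃ E' ∈ minE G, E' ⊆ E := by
  intro E
  induction E using Finset.strongInduction with
  | H E ih =>
    intro hE
    by_cases h : E ∈ minE G
    · exact ⟨E, h, Finset.Subset.refl _⟩
    · simp only [minE, Finset.mem_filter, not_and, not_forall] at h
      obtain ⟨E', h1, h2, h3⟩ := h hE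
      obtain ⟨E'', h4, h5⟩ := ih E' (Finset.ssubset_iff_subset_ne.2 ⟨h2, h3⟩) h1
      exact ⟨E'', h4, h5.trans h2⟩

lemma indep_of_ssubset {G : Finset (Finset V)} {E T : Finset V} (h : E ∈ minE G) (hT : T ⊂ E) :
    Indep G T := by
  intro E' hE' hs
  have := (Finset.mem_filter.1 h).2 E' hE' (hs.trans hT.1)
  subst this
  exact hT.2 hs

lemma wdeg_self {p : ℝ} {G : Finset (Finset V)} {E : Finset V} (h : E ∈ minE G) :
    wdeg p G E = 1 := by
  unfold wdeg
  have : (minE G).filter (fun E' => E ⊆ E') = {E} := by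
    ext E'
    simp only [Finset.mem_filter, Finset.mem_singleton]
    constructor
    · rintro ⟨h1, h2⟩
      exact ((Finset.mem_filter.1 h1).2 E (minE_sub h) h2).symm
    · rintro rfl
      exact ⟨h, Finset.Subset.refl _⟩
  rw [this]
  simp

lemma wdeg_nonneg {p : ℝ} (h0 : 0 ≤ p) (G : Finset (Finset V)) (T : Finset V) :
    0 ≤ wdeg p G T := Finset.sum_nonneg fun _ _ => by positivity

lemma pair_bound {p : ℝ} (h0 : 0 ≤ p) {r : ℕ} {G : Finset (Finset V)}
    (hr : ∀ E ∈ G, E.card ≤ r) {T : Finset V} {K : ℝ} (hK : 1 ≤ K)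
    (hdeg : ∀ T', T ⊂ T' → Indep G T' → wdeg p G T' ≤ K)
    {E : Finset V} (hE : E ∈ minE G) (hTE : T ⊆ E) :
    ∑ E' ∈ (minE G).filter (fun E => T ⊆ E), p ^ ((E \ T) ∪ (E' \ T)).card ≤
      p ^ (E \ T).card * (wdeg p G T + 2 ^ r * K) := by
  set D := (minE G).filter (fun E => T ⊆ E) with hD
  set P := E.powerset.filter (fun T' => T ⊂ T') with hP
  have step1 : ∀ E' ∈ D, p ^ ((E \ T) ∪ (E' \ T)).card ≤ p ^ (E \ T).card *
      (p ^ (E' \ T).card + ∑ T' ∈ P, if T' ⊆ E' then p ^ (E' \ T').card else 0) := by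
    intro E' hE'
    have hTE' : T ⊆ E' := (Finset.mem_filter.1 hE').2
    have e1 : (E \ T) ∪ (E' \ T) = (E \ T) ∪ (E' \ E) := by
      ext x
      simp only [Finset.mem_union, Finset.mem_sdiff]
      have := @hTE x
      tauto
    have hdis : Disjoint (E \ T) (E' \ E) := by
      rw [Finset.disjoint_left]
      intro x hx hx'
      simp only [Finset.mem_sdiff] at hx hx'
      tauto
    rw [e1, Finset.card_union_of_disjoint hdis, pow_add]
    refine mul_le_mul_of_nonneg_left ?_ (by positivity)
    have hnn : 0 ≤ ∑ T' ∈ P, if T' ⊆ E' then p ^ (E' \ T').card else 0 :=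
      Finset.sum_nonneg fun _ _ => by split_ifs <;> positivity
    by_cases hT : T = E ∩ E'
    · have : E' \ T = E' \ E := by
        rw [hT]; ext x; simp only [Finset.mem_sdiff, Finset.mem_inter]; tauto
      rw [this]
      linarith
    · have hmem : E ∩ E' ∈ P := by
        simp only [hP, Finset.mem_filter, Finset.mem_powerset]
        exact ⟨Finset.inter_subset_left,
          Finset.ssubset_iff_subset_ne.2 ⟨Finset.subset_inter hTE hTE', hT⟩⟩
      have := Finset.single_le_sum (f := fun T' => if T' ⊆ E' then p ^ (E' \ T').card else 0)
        (fun _ _ => by split_ifs <;> positivity) hmem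
      simp only [Finset.inter_subset_right, if_true] at this
      have e2 : E' \ (E ∩ E') = E' \ E := by
        ext x; simp only [Finset.mem_sdiff, Finset.mem_inter]; tauto
      rw [e2] at this
      have : 0 ≤ p ^ (E' \ T).card := by positivity
      linarith
  refine (Finset.sum_le_sum step1).trans ?_
  rw [← Finset.mul_sum]
  refine mul_le_mul_of_nonneg_left ?_ (by positivity)
  rw [Finset.sum_add_distrib, Finset.sum_comm]
  refine add_le_add (le_of_eq rfl) ?_
  have step2 : ∀ T' ∈ P, ∑ E' ∈ D, (if T' ⊆ E' then p ^ (E' \ T').card else 0) ≤ K := by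
    intro T' hT'
    simp only [hP, Finset.mem_filter, Finset.mem_powerset] at hT'
    have h1 : ∑ E' ∈ D, (if T' ⊆ E' then p ^ (E' \ T').card else 0) ≤ wdeg p G T' := by
      unfold wdeg
      rw [Finset.sum_filter (fun E => T' ⊆ E)]
      exact Finset.sum_le_sum_of_subset_of_nonneg (Finset.filter_subset _ _)
        fun _ _ _ => by split_ifs <;> positivity
    refine h1.trans ?_
    by_cases he : T' = E
    · rw [he, wdeg_self hE]; exact hK
    · exact hdeg T' hT'.2 (indep_of_ssubset hE (Finset.ssubset_iff_subset_ne.2 ⟨hT'.1, he⟩))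
  refine (Finset.sum_le_card_nsmul _ _ _ step2).trans ?_
  rw [nsmul_eq_mul]
  refine mul_le_mul_of_nonneg_right ?_ (by linarith)
  have c1 : P.card ≤ 2 ^ r := by
    refine (Finset.card_le_card (Finset.filter_subset _ _)).trans ?_
    rw [Finset.card_powerset]
    exact Nat.pow_le_pow_right (by norm_num) (hr E (minE_sub hE))
  exact_mod_cast c1

open Classical in
lemma wdeg_step {p : ℝ} (h0 : 0 ≤ p) (h1 : p < 1) {r : ℕ} {G : Finset (Finset V)}
    (hr : ∀ E ∈ G, E.card ≤ r) (ht : Terminal p r G) {T : Finset V} {K : ℝ} (hK : 1 ≤ K)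
    (hne : T.Nonempty) (hT : Indep G T) (hTr : T.card ≤ r)
    (hdeg : ∀ T', T ⊂ T' → Indep G T' → wdeg p G T' ≤ K) :
    wdeg p G T ≤ 2 ^ r * K := by
  set D := (minE G).filter (fun E => T ⊆ E) with hD
  set a : Finset V → ℝ := fun R => wt p R * (if Indep G R then 1 else 0) with ha
  set X : Finset V → ℝ := fun R => ∑ E ∈ D, if E \ T ⊆ R then 1 else 0 with hX
  set b : Finset V → ℝ := fun R => if Indep G (R ∪ T) then 0 else 1 with hb
  set μ := wdeg p G T with hμ
  have ha0 : ∀ R, 0 ≤ a R := fun R => mul_nonneg (wt_nonneg h0 h1.le R) (by split_ifs <;> norm_num)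
  have hZpos : 0 < Z p G := lt_of_lt_of_le (pow_pos (by linarith) _)
        (Z_lower h0 h1.le G (hT.mono (by simp)))
  have hμ0 : 0 ≤ μ := wdeg_nonneg h0 G T
  have hXb : ∀ R, X R * b R = X R := by
    intro R
    by_cases h : Indep G (R ∪ T)
    · have : X R = 0 := by
        refine Finset.sum_eq_zero fun E hE => ?_
        rw [if_neg]
        intro hs
        refine h E (minE_sub (Finset.mem_filter.1 hE).1) ?_
        intro x hx
        by_cases hxT : x ∈ T
        · simp [hxT]
        · exact Finset.mem_union_left _ (hs (Finset.mem_sdiff.2 ⟨hx, hxT⟩))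
      simp [this]
    · simp [hb, h]
  have m1 : 3 / 4 * Z p G * μ ≤ ∑ R, a R * X R := by
    have e : ∑ R, a R * X R = ∑ E ∈ D, p ^ (E \ T).card * ZL p G (E \ T) := by
      simp only [hX, Finset.mul_sum]
      rw [Finset.sum_comm]
      exact Finset.sum_congr rfl fun E _ => moment p G (E \ T)
    rw [e, hμ, wdeg, Finset.mul_sum]
    refine Finset.sum_le_sum fun E hE => ?_
    rw [mul_comm]
    refine mul_le_mul_of_nonneg_left ?_ (by positivity)
    have hE' := Finset.mem_filter.1 hE
    refine ht _ ((Finset.card_le_card Finset.sdiff_subset).trans (hr E (minE_sub hE'.1))) ?_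
    exact indep_of_ssubset hE'.1 (Finset.sdiff_ssubset hE'.2 hne)
  have m2 : ∑ R, a R * X R ^ 2 ≤ Z p G * (μ * (μ + 2 ^ r * K)) := by
    have e : ∑ R, a R * X R ^ 2 = ∑ E ∈ D, ∑ E' ∈ D,
        p ^ ((E \ T) ∪ (E' \ T)).card * ZL p G ((E \ T) ∪ (E' \ T)) := by
      have : ∀ R, a R * X R ^ 2 = ∑ E ∈ D, ∑ E' ∈ D,
          a R * (if (E \ T) ∪ (E' \ T) ⊆ R then 1 else 0) := by
        intro R
        rw [sq, hX]
        simp only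
        rw [Finset.sum_mul_sum, Finset.mul_sum]
        refine Finset.sum_congr rfl fun E _ => ?_
        rw [Finset.mul_sum]
        refine Finset.sum_congr rfl fun E' _ => ?_
        congr 1
        simp only [Finset.union_subset_iff]
        by_cases x : E \ T ⊆ R <;> by_cases y : E' \ T ⊆ R <;> simp [x, y]
      simp only [this]
      rw [Finset.sum_comm]
      refine Finset.sum_congr rfl fun E _ => ?_
      rw [Finset.sum_comm]
      exact Finset.sum_congr rfl fun E' _ => moment p G _
    rw [e]
    have e2 : ∀ E ∈ D, ∑ E' ∈ D,
        p ^ ((E \ T) ∪ (E' \ T)).card * ZL p G ((E \ T) ∪ (E' \ T)) ≤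
        p ^ (E \ T).card * (Z p G * (μ + 2 ^ r * K)) := by
      intro E hE
      have hE' := Finset.mem_filter.1 hE
      have := pair_bound h0 hr hK hdeg hE'.1 hE'.2
      calc _ ≤ ∑ E' ∈ D, p ^ ((E \ T) ∪ (E' \ T)).card * Z p G := by
            refine Finset.sum_le_sum fun E' _ => mul_le_mul_of_nonneg_left ?_ (by positivity)
            refine ZL_mono h0 h1.le _ _ _ _ fun R hR => hR.mono ?_
            rw [Finset.union_empty]; exact Finset.subset_union_left
        _ = Z p G * ∑ E' ∈ D, p ^ ((E \ T) ∪ (E' \ T)).card := by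
            rw [← Finset.sum_mul, mul_comm]
        _ ≤ Z p G * (p ^ (E \ T).card * (μ + 2 ^ r * K)) :=
            mul_le_mul_of_nonneg_left this hZpos.le
        _ = _ := by ring
    refine (Finset.sum_le_sum e2).trans (le_of_eq ?_)
    rw [← Finset.sum_mul]
    change μ * _ = _
    ring
  have m3 : ∑ R, a R * b R ≤ Z p G / 4 := by
    have h3 := ht T hTr hT
    have : ∑ R, a R * b R ≤ Z p G - ZL p G T := by
      unfold Z ZL
      rw [← Finset.sum_sub_distrib]
      refine Finset.sum_le_sum fun R _ => ?_
      simp only [ha, hb, Finset.union_empty]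
      by_cases x : Indep G (R ∪ T)
      · have y : Indep G R := x.mono Finset.subset_union_left
        simp [x, y]
      · simp [x]
    linarith
  have cs := Finset.sum_sq_le_sum_mul_sum_of_sq_le_mul (Finset.univ : Finset (Finset V))
    (r := fun R => a R * X R) (f := fun R => a R * X R ^ 2) (g := fun R => a R * b R)
    (fun R _ => mul_nonneg (ha0 R) (sq_nonneg _))
    (fun R _ => mul_nonneg (ha0 R) (by simp only [hb]; split_ifs <;> norm_num))
    (fun R _ => by
      have hbb : b R * b R = b R := by simp only [hb]; split_ifs <;> norm_num
      refine le_of_eq ?_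
      calc (a R * X R) ^ 2 = (a R) ^ 2 * X R * (X R * b R) := by rw [hXb]; ring
        _ = _ := by ring)
  have k1 : (3 / 4 * Z p G * μ) ^ 2 ≤ (Z p G * (μ * (μ + 2 ^ r * K))) * (Z p G / 4) := by
    refine (pow_le_pow_left₀ (by positivity) m1 2).trans (cs.trans ?_)
    refine mul_le_mul m2 m3 ?_ ?_
    · exact Finset.sum_nonneg fun R _ =>
        mul_nonneg (ha0 R) (by simp only [hb]; split_ifs <;> norm_num)
    · positivity
  have hzz : 0 < Z p G ^ 2 := by positivity
  have k2 : 9 / 4 * μ ^ 2 ≤ μ * (μ + 2 ^ r * K) := by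
    by_contra hcon
    push Not at hcon
    nlinarith [mul_lt_mul_of_pos_left hcon hzz]
  have hKr : 0 ≤ 2 ^ r * K := by positivity
  by_contra hcon
  push Not at hcon
  have : 0 < μ := lt_of_le_of_lt hKr hcon
  nlinarith [mul_lt_mul_of_pos_left hcon this]

lemma wdeg_bound {p : ℝ} (h0 : 0 ≤ p) (h1 : p < 1) {r : ℕ} {G : Finset (Finset V)}
    (hr : ∀ E ∈ G, E.card ≤ r) (ht : Terminal p r G) : ∀ (j : ℕ) (T : Finset V),
    T.Nonempty → Indep G T → r ≤ T.card + j → wdeg p G T ≤ ((2:ℝ) ^ r) ^ j := by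
  have hzero : ∀ T : Finset V, Indep G T → r ≤ T.card → wdeg p G T = 0 := by
    intro T hT hc
    refine Finset.sum_eq_zero fun E hE => ?_
    exfalso
    have hE' := Finset.mem_filter.1 hE
    have := Finset.eq_of_subset_of_card_le hE'.2 ((hr E (minE_sub hE'.1)).trans hc)
    exact hT E (minE_sub hE'.1) this.ge
  intro j
  induction j with
  | zero =>
    intro T _ hT hc
    rw [hzero T hT (by simpa using hc)]
    simp
  | succ j ih =>
    intro T hne hT hc
    by_cases hr' : r ≤ T.card
    · rw [hzero T hT hr']; positivity
    · rw [pow_succ, mul_comm]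
      refine wdeg_step h0 h1 hr ht ?_ hne hT (by omega) ?_
      · exact one_le_pow₀ (one_le_pow₀ (by norm_num))
      · intro T' hT' hi
        refine ih T' (hne.mono hT'.1) hi ?_
        have := Finset.card_lt_card hT'
        omega

lemma k_bound {p : ℝ} (h0 : 0 ≤ p) (h1 : p ≤ 1 / 2) (m k : ℕ)
    (h : (1 - p) ^ m ≤ (3 / 4 : ℝ) ^ k) : (k : ℝ) ≤ 8 * p * m := by
  have hp : 0 < 1 - p := by linarith
  have hl := Real.log_le_log (by positivity) h
  rw [Real.log_pow, Real.log_pow] at hl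
  have a1 : Real.log (3 / 4) ≤ -(1 / 4) := by
    have := Real.log_le_sub_one_of_pos (show (0:ℝ) < 3 / 4 by norm_num)
    linarith
  have a2 : -(2 * p) ≤ Real.log (1 - p) := by
    have := Real.one_sub_inv_le_log_of_pos hp
    refine le_trans ?_ this
    have : (1 - p)⁻¹ ≤ 1 + 2 * p := by
      rw [inv_le_comm₀ hp (by linarith), inv_le_iff_one_le_mul₀ (by linarith)]
      nlinarith
    linarith
  have b1 := mul_le_mul_of_nonneg_left a1 (Nat.cast_nonneg (α := ℝ) k)
  have b2 := mul_le_mul_of_nonneg_left a2 (Nat.cast_nonneg (α := ℝ) m)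
  linarith

open Classical in
/-- The container lemma. -/
theorem container {p q A D : ℝ} (hq : 0 < q) (hA : 1 ≤ A) (hD : 0 ≤ D) (hpq : p = A * q)
    (h1 : p ≤ 1 / 2) (r : ℕ) {Φ : Type*} [Fintype Φ] (e : Φ → Finset V)
    (hr : ∀ φ, (e φ).card ≤ r)
    (hco : ∀ J : Finset V, 2 ≤ J.card →
      ((Finset.univ.filter (fun φ => J ⊆ e φ)).card : ℝ) ≤ D * q ^ (J.card - 1)) :
    ∃ C : Finset V → Finset V, ∀ I, (∀ φ, ¬ e φ ⊆ I) → ∃ S ⊆ I,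
      (S.card : ℝ) ≤ r * (8 * p * Fintype.card V) ∧ I ⊆ C S ∧
      ((Finset.univ.filter (fun φ => e φ ⊆ C S)).card : ℝ) ≤
        D / A * (((2:ℝ) ^ r) ^ r * Fintype.card V) := by
  have h0 : 0 < p := by rw [hpq]; positivity
  set H : Finset (Finset V) := Finset.univ.image e with hH
  obtain ⟨f, hf⟩ := container_aux h0.le (by linarith : p < 1) r _ H rfl (by
    intro E hE
    simp only [hH, Finset.mem_image, Finset.mem_univ, true_and] at hE
    obtain ⟨φ, rfl⟩ := hE
    exact hr φ)
  refine ⟨fun S => Finset.univ.filter (fun v => Indep (f S) {v}), fun I hI => ?_⟩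
  obtain ⟨S, hSI, k, hSk, hZ, hT⟩ := hf I (by
    intro E hE
    simp only [hH, Finset.mem_image, Finset.mem_univ, true_and] at hE
    obtain ⟨φ, rfl⟩ := hE
    exact hI φ)
  obtain ⟨t1, t2, t3, t4⟩ := hT S (Finset.Subset.refl _) hSI
  refine ⟨S, hSI, ?_, ?_, ?_⟩
  · have hk := k_bound h0.le h1 (Fintype.card V) k (hZ.trans (by
      refine mul_le_of_le_one_right (by positivity) (Z_le_one h0.le (by linarith) _)))
    calc (S.card : ℝ) ≤ r * k := by exact_mod_cast hSk
      _ ≤ _ := by gcongr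
  · intro v hv
    simp only [Finset.mem_filter, Finset.mem_univ, true_and]
    exact t4.mono (by simpa using hv)
  · set G := f S with hG
    set C : Finset V := Finset.univ.filter (fun v => Indep G {v}) with hC
    set MC := (minE G).filter (fun E => E ⊆ C) with hMC
    have hcard2 : ∀ E ∈ MC, 2 ≤ E.card := by
      intro E hE
      have hE' := Finset.mem_filter.1 hE
      by_contra hlt
      have : E.card = 0 ∨ E.card = 1 := by omega
      rcases this with h | h
      · rw [Finset.card_eq_zero] at h
        subst h
        exact t4 ∅ (minE_sub hE'.1) (by simp)
      · rw [Finset.card_eq_one] at h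
        obtain ⟨v, rfl⟩ := h
        have : v ∈ C := hE'.2 (by simp)
        simp only [hC, Finset.mem_filter, Finset.mem_univ, true_and] at this
        exact this _ (minE_sub hE'.1) (Finset.Subset.refl _)
    have s1 : (Finset.univ.filter (fun φ => e φ ⊆ C)) ⊆
        MC.biUnion (fun E => Finset.univ.filter (fun φ => E ⊆ e φ)) := by
      intro φ hφ
      simp only [Finset.mem_filter, Finset.mem_univ, true_and] at hφ
      obtain ⟨E, hE, hs⟩ := exists_minE (t2 (by simp [hH] : e φ ∈ H))
      simp only [Finset.mem_biUnion, Finset.mem_filter, Finset.mem_univ, true_and, hMC]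
      exact ⟨E, ⟨hE, hs.trans hφ⟩, hs⟩
    have s2 : ((Finset.univ.filter (fun φ => e φ ⊆ C)).card : ℝ) ≤
        ∑ E ∈ MC, ((Finset.univ.filter (fun φ => E ⊆ e φ)).card : ℝ) := by
      exact_mod_cast (Finset.card_le_card s1).trans Finset.card_biUnion_le
    have s3 : ∀ E ∈ MC, ((Finset.univ.filter (fun φ => E ⊆ e φ)).card : ℝ) ≤
        D / A * p ^ (E.card - 1) := by
      intro E hE
      have h2 := hcard2 E hE
      refine (hco E h2).trans ?_
      rw [hpq, mul_pow, div_mul_eq_mul_div, le_div_iff₀ (by linarith)]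
      obtain ⟨j, hj⟩ : ∃ j, E.card - 1 = j + 1 := ⟨E.card - 2, by omega⟩
      rw [hj, pow_succ A]
      have : 1 ≤ A ^ j := one_le_pow₀ hA
      have hnn : 0 ≤ D * q ^ (j + 1) * A := by positivity
      nlinarith [mul_le_mul_of_nonneg_left this hnn]
    have s4 : ∑ E ∈ MC, p ^ (E.card - 1) ≤ ((2:ℝ) ^ r) ^ r * Fintype.card V := by
      have u1 : ∀ E ∈ MC, p ^ (E.card - 1) ≤ ∑ v ∈ C, if v ∈ E then p ^ (E \ {v}).card else 0 := by
        intro E hE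
        have h2 := hcard2 E hE
        obtain ⟨v, hv⟩ := Finset.card_pos.1 (by omega : 0 < E.card)
        have hvC : v ∈ C := (Finset.mem_filter.1 hE).2 hv
        have := Finset.single_le_sum (f := fun v => if v ∈ E then p ^ (E \ {v}).card else 0)
          (fun _ _ => by split_ifs <;> positivity) hvC
        simp only [hv, if_true] at this
        rw [Finset.card_sdiff_of_subset (by simpa using hv), Finset.card_singleton] at this
        exact this
      refine (Finset.sum_le_sum u1).trans ?_
      rw [Finset.sum_comm]
      have u2 : ∀ v ∈ C, ∑ E ∈ MC, (if v ∈ E then p ^ (E \ {v}).card else 0) ≤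
          ((2:ℝ) ^ r) ^ r := by
        intro v hv
        simp only [hC, Finset.mem_filter, Finset.mem_univ, true_and] at hv
        refine le_trans ?_ (wdeg_bound h0.le (by linarith) t3 t1 r {v} (by simp) hv (by omega))
        unfold wdeg
        simp only [Finset.singleton_subset_iff]
        rw [Finset.sum_filter (fun E => v ∈ E)]
        exact Finset.sum_le_sum_of_subset_of_nonneg (Finset.filter_subset _ _)
          fun _ _ _ => by split_ifs <;> positivity
      refine (Finset.sum_le_card_nsmul _ _ _ u2).trans ?_
      rw [nsmul_eq_mul, mul_comm]
      have : (C.card : ℝ) ≤ Fintype.card V := by exact_mod_cast Finset.card_le_univ C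
      gcongr
    refine s2.trans ((Finset.sum_le_sum s3).trans ?_)
    rw [← Finset.mul_sum]
    have : 0 ≤ D / A := by positivity
    gcongr

end HC
set_option linter.unusedSectionVars false

namespace HC

lemma m2_bound {β : Type*} [Fintype β] [DecidableEq β] (F : β → β → Prop)
    (hor : ∀ a b, F a b → ¬ F b a) (A : Finset (β × β)) (hA : ∀ a ∈ A, F a.1 a.2)
    (h2 : 2 ≤ A.card) :
    3 ≤ (A.image Prod.fst ∪ A.image Prod.snd).card ∧
    (A.card - 1 : ℝ) ≤ m2Rel F * ((A.image Prod.fst ∪ A.image Prod.snd).card - 2 : ℝ) := by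
  set U := A.image Prod.fst ∪ A.image Prod.snd with hU
  have hU1 : ∀ a ∈ A, a.1 ∈ U := fun a ha =>
    Finset.mem_union_left _ (Finset.mem_image_of_mem _ ha)
  have hU2 : ∀ a ∈ A, a.2 ∈ U := fun a ha =>
    Finset.mem_union_right _ (Finset.mem_image_of_mem _ ha)
  have hne : ∀ a b, F a b → a ≠ b := fun a b h hab => by subst hab; exact hor a a h h
  have h3 : 3 ≤ U.card := by
    obtain ⟨x, hx, y, hy, hxy⟩ := Finset.one_lt_card.1 (by omega : 1 < A.card)
    have hx' := hne _ _ (hA x hx)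
    have hy' := hne _ _ (hA y hy)
    have hsub : ({x.1, x.2} : Finset β) ⊆ U := by
      intro z hz
      simp only [Finset.mem_insert, Finset.mem_singleton] at hz
      rcases hz with rfl | rfl
      · exact hU1 x hx
      · exact hU2 x hx
    have hc : ({x.1, x.2} : Finset β).card = 2 := Finset.card_pair hx'
    by_contra hlt
    have heq := Finset.eq_of_subset_of_card_le hsub (by omega)
    have k1 := hU1 y hy
    have k2 := hU2 y hy
    rw [← heq] at k1 k2
    simp only [Finset.mem_insert, Finset.mem_singleton] at k1 k2
    have fx := hA x hx
    have fy := hA y hy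
    rcases k1 with k1 | k1 <;> rcases k2 with k2 | k2
    · exact hy' (k1.trans k2.symm)
    · exact hxy (Prod.ext k1.symm k2.symm)
    · rw [k1, k2] at fy; exact hor _ _ fx fy
    · exact hy' (k1.trans k2.symm)
  refine ⟨h3, ?_⟩
  let J : (SimpleGraph.fromRel F).Subgraph :=
    { verts := U
      Adj := fun a b => (a, b) ∈ A ∨ (b, a) ∈ A
      adj_sub := by
        intro a b h
        rw [SimpleGraph.fromRel_adj]
        rcases h with h | h
        · exact ⟨hne _ _ (hA _ h), Or.inl (hA _ h)⟩
        · exact ⟨(hne _ _ (hA _ h)).symm, Or.inr (hA _ h)⟩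
      edge_vert := by
        intro a b h
        rcases h with h | h
        · exact hU1 _ h
        · exact hU2 _ h
      symm := ⟨fun a b h => h.symm⟩ }
  have hJe : J.edgeSet = ((A.image (fun a => s(a.1, a.2)) : Finset (Sym2 β)) : Set (Sym2 β)) := by
    ext e
    induction e using Sym2.ind with
    | _ a b =>
    rw [SimpleGraph.Subgraph.mem_edgeSet]
    simp only [Finset.coe_image, Set.mem_image, Finset.mem_coe, Prod.exists, Sym2.eq_iff]
    constructor
    · rintro (h | h)
      · exact ⟨a, b, h, Or.inl ⟨rfl, rfl⟩⟩
      · exact ⟨b, a, h, Or.inr ⟨rfl, rfl⟩⟩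
    · rintro ⟨c, d, h, ⟨rfl, rfl⟩ | ⟨rfl, rfl⟩⟩
      · exact Or.inl h
      · exact Or.inr h
  have hcard : J.edgeSet.ncard = A.card := by
    rw [hJe, Set.ncard_coe_finset, Finset.card_image_of_injOn]
    rintro ⟨a, b⟩ hx ⟨c, d⟩ hy h
    simp only [Sym2.eq_iff] at h
    rcases h with ⟨rfl, rfl⟩ | ⟨rfl, rfl⟩
    · rfl
    · exact absurd (hA _ hy) (hor _ _ (hA _ hx))
  have hv : J.verts.ncard = U.card := by
    change (U : Set β).ncard = _
    rw [Set.ncard_coe_finset]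
  have hle : d2 U.card A.card ≤ m2Rel F := by
    unfold m2Rel m2
    refine le_csSup ?_ ⟨J, by rw [hv, hcard]⟩
    have : Finite (SimpleGraph.fromRel F).Subgraph := inferInstance
    refine (Set.Finite.subset (Set.finite_range
      (fun J : (SimpleGraph.fromRel F).Subgraph => d2 J.verts.ncard J.edgeSet.ncard)) ?_).bddAbove
    rintro x ⟨J, rfl⟩
    exact ⟨J, rfl⟩
  unfold d2 at hle
  rw [if_pos h3] at hle
  have : (3 : ℝ) ≤ U.card := by exact_mod_cast h3
  rwa [div_le_iff₀ (by linarith)] at hle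

lemma exists_transitive {α : Type*} (o : α → α → Prop)
    (ho : ∀ a b, a ≠ b → o a b ∨ o b a) : ∀ (k : ℕ) (s : Finset α), 2 ^ k ≤ s.card →
    ∃ l : List α, l.length = k ∧ l.Pairwise (fun a b => a ≠ b ∧ o a b) ∧ ∀ x ∈ l, x ∈ s := by
  classical
  intro k
  induction k with
  | zero => intro s _; exact ⟨[], by simp⟩
  | succ k ih =>
    intro s hs
    obtain ⟨v, hv⟩ := Finset.card_pos.1 (lt_of_lt_of_le (by positivity) hs)
    set t := s.erase v with ht
    have htc : t.card + 1 = s.card := Finset.card_erase_add_one hv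
    set O := t.filter (fun x => o v x)
    set P := t.filter (fun x => ¬ o v x)
    have hOP : O.card + P.card = t.card := Finset.card_filter_add_card_filter_not _
    rw [pow_succ] at hs
    have : 2 ^ k ≤ O.card ∨ 2 ^ k ≤ P.card := by omega
    rcases this with h | h
    · obtain ⟨l, h1, h2, h3⟩ := ih O h
      refine ⟨v :: l, by simp [h1], ?_, ?_⟩
      · rw [List.pairwise_cons]
        refine ⟨fun x hx => ?_, h2⟩
        have := h3 x hx
        simp only [O, t, Finset.mem_filter, Finset.mem_erase] at this
        exact ⟨this.1.1.symm, this.2⟩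
      · intro x hx
        rcases List.mem_cons.1 hx with rfl | hx
        · exact hv
        · have := h3 x hx
          simp only [O, t, Finset.mem_filter, Finset.mem_erase] at this
          exact this.1.2
    · obtain ⟨l, h1, h2, h3⟩ := ih P h
      refine ⟨l ++ [v], by simp [h1], ?_, ?_⟩
      · rw [List.pairwise_append]
        refine ⟨h2, by simp, fun x hx y hy => ?_⟩
        have := h3 x hx
        simp only [P, t, Finset.mem_filter, Finset.mem_erase] at this
        rw [List.mem_singleton] at hy
        subst hy
        exact ⟨this.1.1, (ho _ _ this.1.1).resolve_right this.2⟩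
      · intro x hx
        rcases List.mem_append.1 hx with hx | hx
        · have := h3 x hx
          simp only [P, t, Finset.mem_filter, Finset.mem_erase] at this
          exact this.1.2
        · rw [List.mem_singleton] at hx; subst hx; exact hv

lemma topo {β : Type*} [Fintype β] (F : β → β → Prop) (hac : RelAcyclic F) :
    ∃ t : β → Fin (Fintype.card β), Function.Injective t ∧ ∀ a b, F a b → t a < t b := by
  classical
  have hanti : ∀ a b, Relation.ReflTransGen F a b → Relation.ReflTransGen F b a → a = b := by
    intro a b h1 h2
    rcases Relation.reflTransGen_iff_eq_or_transGen.1 h1 with h | h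
    · exact h.symm
    · exact absurd (h.trans_left h2) (hac a)
  let po : PartialOrder β :=
    { le := Relation.ReflTransGen F
      le_refl := fun _ => Relation.ReflTransGen.refl
      le_trans := fun _ _ _ => Relation.ReflTransGen.trans
      le_antisymm := hanti }
  letI : Fintype (LinearExtension β) := inferInstanceAs (Fintype β)
  have e : LinearExtension β ≃o Fin (Fintype.card β) :=
    (Fintype.orderIsoFinOfCardEq (LinearExtension β) rfl).symm
  refine ⟨fun x => e (toLinearExtension x), ?_, ?_⟩
  · intro a b h
    exact e.injective h
  · intro a b h
    refine e.strictMono (lt_of_le_of_ne ?_ ?_)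
    · exact toLinearExtension.monotone (Relation.ReflTransGen.single h : Relation.ReflTransGen F a b)
    · intro h'
      have h'' : a = b := h'
      subst h''
      exact hac a (Relation.TransGen.single h)

lemma tournament {β : Type*} [Fintype β] (F : β → β → Prop) (hac : RelAcyclic F) {R : ℕ}
    (hR : 2 ^ Fintype.card β ≤ R) (o : Fin R → Fin R → Prop)
    (ho : ∀ a b, a ≠ b → o a b ∨ o b a) :
    ∃ h : β → Fin R, Function.Injective h ∧ ∀ a b, F a b → o (h a) (h b) := by
  obtain ⟨l, h1, h2, -⟩ := exists_transitive o ho (Fintype.card β) Finset.univ (by simpa using hR)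
  obtain ⟨t, ht, htF⟩ := topo F hac
  rw [List.pairwise_iff_get] at h2
  refine ⟨fun b => l.get ((t b).cast h1.symm), ?_, ?_⟩
  · intro a b hab
    by_contra hne
    have hne' : t a ≠ t b := fun h => hne (ht h)
    rcases lt_or_gt_of_ne hne' with h | h
    · exact (h2 ((t a).cast h1.symm) ((t b).cast h1.symm) h).1 hab
    · exact (h2 ((t b).cast h1.symm) ((t a).cast h1.symm) h).1 hab.symm
  · intro a b hab
    exact (h2 ((t a).cast h1.symm) ((t b).cast h1.symm) (htF a b hab)).2

lemma count_comp {ρ κ : Type*} [Fintype ρ] [Fintype κ] [DecidableEq ρ] [DecidableEq κ] {N : ℕ}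
    (h : κ → ρ) (hh : Function.Injective h) (X : Finset (κ → Fin N)) :
    (Finset.univ.filter (fun g : ρ → Fin N => g ∘ h ∈ X)).card ≤
      X.card * N ^ (Fintype.card ρ - Fintype.card κ) := by
  classical
  let Y := {x : ρ // x ∉ Finset.univ.image h}
  have hY : Fintype.card Y = Fintype.card ρ - Fintype.card κ := by
    simp only [Y]
    rw [Fintype.card_subtype_compl, Fintype.card_coe, Finset.card_image_of_injective _ hh,
      Finset.card_univ]
  have hY2 : (Finset.univ : Finset (Y → Fin N)).card = N ^ (Fintype.card ρ - Fintype.card κ) := by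
    rw [Finset.card_univ, Fintype.card_fun, hY, Fintype.card_fin]
  rw [← hY2, ← Finset.card_product]
  refine Finset.card_le_card_of_injOn (fun g => (g ∘ h, fun y => g y.1)) ?_ ?_
  · intro g hg
    simp only [Finset.coe_filter, Finset.mem_univ, true_and, Set.mem_setOf_eq] at hg
    simp [hg]
  · intro g _ g' _ he
    simp only [Prod.mk.injEq] at he
    funext x
    by_cases hx : x ∈ Finset.univ.image h
    · simp only [Finset.mem_image, Finset.mem_univ, true_and] at hx
      obtain ⟨k, rfl⟩ := hx
      exact congrFun he.1 k
    · exact congrFun he.2 ⟨x, hx⟩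

section
open Classical

/-- arcs of the digraph `F` -/
noncomputable def arcs {β : Type*} [Fintype β] (F : β → β → Prop) : Finset (β × β) :=
  Finset.univ.filter (fun x => F x.1 x.2)

/-- arcs of the copy of `F` given by `f` -/
noncomputable def earcs {β : Type*} [Fintype β] (F : β → β → Prop) {N : ℕ} (f : β → Fin N) :
    Finset (Fin N × Fin N) := (arcs F).image (Prod.map f f)

lemma codeg {β : Type*} [Fintype β] (F : β → β → Prop)
    (hor : ∀ a b, F a b → ¬ F b a) {N : ℕ} (hN : 0 < N) {q : ℝ} (hq0 : 0 < q) (hq1 : q ≤ 1)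
    (hNq : 1 ≤ N * q ^ (m2Rel F)) (J : Finset (Fin N × Fin N)) (hJ : 2 ≤ J.card) :
    ((Finset.univ.filter
      (fun f : {f : β → Fin N // Function.Injective f} => J ⊆ earcs F f.1)).card : ℝ) ≤
      (((arcs F).card : ℝ) ^ (arcs F).card * (N ^ Fintype.card β / N ^ 2)) * q ^ (J.card - 1) := by
  set r := (arcs F).card with hr
  by_cases hJr : J.card ≤ r
  swap
  · have : (Finset.univ.filter
      (fun f : {f : β → Fin N // Function.Injective f} => J ⊆ earcs F f.1)) = ∅ := by
      rw [Finset.filter_eq_empty_iff]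
      intro f _ hs
      exact hJr ((Finset.card_le_card hs).trans Finset.card_image_le)
    rw [this]
    simp only [Finset.card_empty, Nat.cast_zero]
    positivity
  have hcov : (Finset.univ.filter
      (fun f : {f : β → Fin N // Function.Injective f} => J ⊆ earcs F f.1)) ⊆
      (Finset.univ : Finset (J → arcs F)).biUnion (fun s => Finset.univ.filter
        (fun f : {f : β → Fin N // Function.Injective f} =>
          ∀ j : J, Prod.map f.1 f.1 (s j).1 = j.1)) := by
    intro f hf
    simp only [Finset.mem_filter, Finset.mem_univ, true_and] at hf
    have : ∀ j : J, ∃ a : arcs F, Prod.map f.1 f.1 a.1 = j.1 := by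
      intro j
      obtain ⟨a, ha, he⟩ := Finset.mem_image.1 (hf j.2)
      exact ⟨⟨a, ha⟩, he⟩
    choose s hs using this
    simp only [Finset.mem_biUnion, Finset.mem_univ, true_and, Finset.mem_filter]
    exact ⟨s, hs⟩
  have hNr : (0:ℝ) < N := by exact_mod_cast hN
  have hone : ∀ s : J → arcs F, ((Finset.univ.filter
        (fun f : {f : β → Fin N // Function.Injective f} =>
          ∀ j : J, Prod.map f.1 f.1 (s j).1 = j.1)).card : ℝ) ≤
      (N ^ Fintype.card β / N ^ 2) * q ^ (J.card - 1) := by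
    intro s
    rcases Finset.eq_empty_or_nonempty (Finset.univ.filter
        (fun f : {f : β → Fin N // Function.Injective f} =>
          ∀ j : J, Prod.map f.1 f.1 (s j).1 = j.1)) with h | ⟨f0, hf0⟩
    · rw [h]; simp only [Finset.card_empty, Nat.cast_zero]; positivity
    simp only [Finset.mem_filter, Finset.mem_univ, true_and] at hf0
    have hsinj : Function.Injective (fun j => (s j).1) := by
      intro j j' h
      have e1 := hf0 j
      have e2 := hf0 j'
      simp only at h
      rw [h] at e1
      exact Subtype.ext (e1.symm.trans e2)
    set A : Finset (β × β) := Finset.univ.image (fun j => (s j).1) with hA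
    have hAc : A.card = J.card := by
      rw [hA, Finset.card_image_of_injective _ hsinj, Finset.card_univ, Fintype.card_coe]
    obtain ⟨hu3, hm⟩ := m2_bound F hor A (by
      intro a ha
      simp only [hA, Finset.mem_image, Finset.mem_univ, true_and] at ha
      obtain ⟨j, rfl⟩ := ha
      exact (Finset.mem_filter.1 (s j).2).2) (by rw [hAc]; exact hJ)
    set U := A.image Prod.fst ∪ A.image Prod.snd with hU
    have hUv : U.card ≤ Fintype.card β := Finset.card_le_univ _
    -- counting
    have hcount : (Finset.univ.filter
        (fun f : {f : β → Fin N // Function.Injective f} =>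
          ∀ j : J, Prod.map f.1 f.1 (s j).1 = j.1)).card ≤ N ^ (Fintype.card β - U.card) := by
      have h1 := count_comp (ρ := β) (κ := U) (N := N) (fun u => u.1) Subtype.val_injective
        {fun u => f0.1 u.1}
      rw [Finset.card_singleton, one_mul, Fintype.card_coe] at h1
      refine le_trans ?_ h1
      refine Finset.card_le_card_of_injOn (fun f => f.1) ?_ (Subtype.val_injective.injOn)
      intro f hf
      simp only [Finset.coe_filter, Finset.mem_univ, true_and, Set.mem_setOf_eq] at hf
      simp only [Finset.coe_filter, Finset.mem_univ, true_and, Set.mem_setOf_eq,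
        Finset.mem_singleton]
      funext u
      obtain ⟨u, hu⟩ := u
      simp only [Function.comp]
      simp only [hU, hA, Finset.mem_union, Finset.mem_image, Finset.mem_univ, true_and] at hu
      rcases hu with ⟨a, ⟨j, rfl⟩, rfl⟩ | ⟨a, ⟨j, rfl⟩, rfl⟩
      · have := (hf j).trans (hf0 j).symm
        exact congrArg Prod.fst this
      · have := (hf j).trans (hf0 j).symm
        exact congrArg Prod.snd this
    have hcountR : ((Finset.univ.filter
        (fun f : {f : β → Fin N // Function.Injective f} =>
          ∀ j : J, Prod.map f.1 f.1 (s j).1 = j.1)).card : ℝ) ≤ N ^ (Fintype.card β - U.card) := by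
      exact_mod_cast hcount
    refine hcountR.trans ?_
    obtain ⟨w, hw⟩ : ∃ w, U.card = w + 2 := ⟨U.card - 2, by omega⟩
    have hkey : 1 ≤ (N:ℝ) ^ w * q ^ (J.card - 1) := by
      have a1 : 1 ≤ ((N:ℝ) * q ^ (m2Rel F)) ^ w := one_le_pow₀ hNq
      refine a1.trans ?_
      rw [mul_pow]
      refine mul_le_mul_of_nonneg_left ?_ (by positivity)
      rw [← Real.rpow_natCast, ← Real.rpow_natCast, ← Real.rpow_mul hq0.le]
      refine Real.rpow_le_rpow_of_exponent_ge hq0 hq1 ?_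
      rw [hw, hAc] at hm
      rw [Nat.cast_sub (by omega)]
      push_cast at hm ⊢
      linarith
    obtain ⟨c, hc⟩ : ∃ c, Fintype.card β = U.card + c := ⟨_, (Nat.add_sub_cancel' hUv).symm⟩
    have e1 : Fintype.card β - U.card = c := by omega
    rw [e1, hc, hw, div_mul_eq_mul_div, le_div_iff₀ (by positivity)]
    calc (N:ℝ) ^ c * N ^ 2 = N ^ c * N ^ 2 * 1 := by ring
      _ ≤ N ^ c * N ^ 2 * (N ^ w * q ^ (J.card - 1)) :=
          mul_le_mul_of_nonneg_left hkey (by positivity)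
      _ = _ := by ring
  have hnum : ((Finset.univ : Finset (J → arcs F)).card : ℝ) ≤ (r : ℝ) ^ r := by
    rw [Finset.card_univ, Fintype.card_fun, Fintype.card_coe, Fintype.card_coe]
    push_cast
    have : (1:ℝ) ≤ r := by exact_mod_cast (by omega : 1 ≤ r)
    exact pow_le_pow_right₀ this hJr
  calc _ ≤ ∑ s ∈ (Finset.univ : Finset (J → arcs F)), ((Finset.univ.filter
        (fun f : {f : β → Fin N // Function.Injective f} =>
          ∀ j : J, Prod.map f.1 f.1 (s j).1 = j.1)).card : ℝ) := by
        exact_mod_cast (Finset.card_le_card hcov).trans Finset.card_biUnion_le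
    _ ≤ (Finset.univ : Finset (J → arcs F)).card •
        ((N ^ Fintype.card β / N ^ 2) * q ^ (J.card - 1)) :=
        Finset.sum_le_card_nsmul _ _ _ fun s _ => hone s
    _ ≤ _ := by
        rw [nsmul_eq_mul, mul_assoc]
        exact mul_le_mul_of_nonneg_right hnum (by positivity)

lemma supersat {β : Type*} [Fintype β] (F : β → β → Prop) (hac : RelAcyclic F) {R : ℕ}
    (hR : 2 ^ (Fintype.card β + 1) ≤ R) {N : ℕ} (hN : 4 * R ^ 2 ≤ N) (C : Finset (Fin N × Fin N))
    (hC : ((Finset.univ.filter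
      (fun f : {f : β → Fin N // Function.Injective f} => earcs F f.1 ⊆ C)).card : ℝ) ≤
      N ^ Fintype.card β / (2 * R ^ Fintype.card β)) :
    (N : ℝ) ^ 2 / (8 * R ^ 2) ≤ ((Finset.univ.filter (fun x : Fin N × Fin N =>
      x.1 < x.2 ∧ x ∉ C ∧ x.swap ∉ C)).card : ℝ) := by
  set v := Fintype.card β with hv
  have hR2 : 2 ≤ R := le_trans (by
    calc 2 = 2 ^ 1 := rfl
      _ ≤ 2 ^ (v + 1) := Nat.pow_le_pow_right (by norm_num) (by omega)) hR
  have hvR : v ≤ R := by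
    have := (Nat.lt_two_pow_self (n := v + 1)).le
    omega
  have hNpos : 0 < N := lt_of_lt_of_le (by positivity) hN
  set Bad : Finset (Fin N × Fin N) := Finset.univ.filter (fun x => x.1 = x.2 ∨ (x ∉ C ∧ x.swap ∉ C))
    with hBad
  set cop := (Finset.univ.filter
      (fun f : {f : β → Fin N // Function.Injective f} => earcs F f.1 ⊆ C)) with hcop
  set BadX : Finset (Fin 2 → Fin N) := Finset.univ.filter (fun g => (g 0, g 1) ∈ Bad) with hBadX
  have hBX : BadX.card ≤ Bad.card := by
    refine Finset.card_le_card_of_injOn (fun g => (g 0, g 1)) ?_ ?_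
    · intro g hg
      simpa [hBadX] using hg
    · intro g _ g' _ h
      simp only [Prod.mk.injEq] at h
      funext i
      fin_cases i
      · exact h.1
      · exact h.2
  set copX : Finset (β → Fin N) := cop.image (fun f => f.1) with hcopX
  have hcX : copX.card ≤ cop.card := Finset.card_image_le
  have hcov : (Finset.univ : Finset (Fin R → Fin N)) ⊆
      ((Finset.univ.filter (fun ij : Fin R × Fin R => ij.1 ≠ ij.2)).biUnion
        (fun ij => Finset.univ.filter (fun g : Fin R → Fin N => g ∘ ![ij.1, ij.2] ∈ BadX))) ∪
      ((Finset.univ.filter (fun h : β → Fin R => Function.Injective h)).biUnion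
        (fun h => Finset.univ.filter (fun g : Fin R → Fin N => g ∘ h ∈ copX))) := by
    intro g _
    by_cases hb : ∃ i j, i ≠ j ∧ (g i, g j) ∈ Bad
    · obtain ⟨i, j, hij, hb⟩ := hb
      refine Finset.mem_union_left _ ?_
      simp only [Finset.mem_biUnion, Finset.mem_filter, Finset.mem_univ, true_and, hBadX]
      exact ⟨(i, j), hij, by simpa using hb⟩
    · push Not at hb
      refine Finset.mem_union_right _ ?_
      have hb' : ∀ i j, i ≠ j → g i ≠ g j ∧ ((g i, g j) ∈ C ∨ (g j, g i) ∈ C) := by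
        intro i j hij
        have := hb i j hij
        simp only [hBad, Finset.mem_filter, Finset.mem_univ, true_and, Prod.swap_prod_mk] at this
        tauto
      obtain ⟨h, hinj, hF⟩ := tournament F hac
        (le_trans (Nat.pow_le_pow_right (by norm_num) (Nat.le_succ _)) hR)
        (fun i j => (g i, g j) ∈ C) (fun i j hij => (hb' i j hij).2)
      simp only [Finset.mem_biUnion, Finset.mem_filter, Finset.mem_univ, true_and]
      refine ⟨h, hinj, ?_⟩
      have hgh : Function.Injective (g ∘ h) := by
        intro a b hab
        by_contra hne
        exact (hb' (h a) (h b) (fun hh => hne (hinj hh))).1 hab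
      simp only [hcopX, Finset.mem_image]
      refine ⟨⟨g ∘ h, hgh⟩, ?_, rfl⟩
      simp only [hcop, Finset.mem_filter, Finset.mem_univ, true_and]
      intro x hx
      simp only [earcs, arcs, Finset.mem_image, Finset.mem_filter, Finset.mem_univ, true_and] at hx
      obtain ⟨a, ha, rfl⟩ := hx
      exact hF _ _ ha
  have c0 := Finset.card_le_card hcov
  rw [Finset.card_univ, Fintype.card_fun, Fintype.card_fin, Fintype.card_fin] at c0
  have c1 : ((Finset.univ.filter (fun ij : Fin R × Fin R => ij.1 ≠ ij.2)).biUnion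
        (fun ij => Finset.univ.filter (fun g : Fin R → Fin N => g ∘ ![ij.1, ij.2] ∈ BadX))).card ≤
        R ^ 2 * (Bad.card * N ^ (R - 2)) := by
    refine (Finset.card_biUnion_le_card_mul _ _ (Bad.card * N ^ (R - 2)) ?_).trans ?_
    · intro ij hij
      simp only [Finset.mem_filter, Finset.mem_univ, true_and] at hij
      have := count_comp (N := N) ![ij.1, ij.2] (by
        intro a b hab
        fin_cases a <;> fin_cases b <;> simp_all) BadX
      rw [Fintype.card_fin, Fintype.card_fin] at this
      exact this.trans (Nat.mul_le_mul_right _ hBX)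
    · refine Nat.mul_le_mul_right _ ((Finset.card_le_univ _).trans ?_)
      rw [Fintype.card_prod, Fintype.card_fin, sq]
  have c2 : ((Finset.univ.filter (fun h : β → Fin R => Function.Injective h)).biUnion
        (fun h => Finset.univ.filter (fun g : Fin R → Fin N => g ∘ h ∈ copX))).card ≤
        R ^ v * (cop.card * N ^ (R - v)) := by
    refine (Finset.card_biUnion_le_card_mul _ _ (cop.card * N ^ (R - v)) ?_).trans ?_
    · intro h hh
      simp only [Finset.mem_filter, Finset.mem_univ, true_and] at hh
      have := count_comp (N := N) h hh copX
      rw [Fintype.card_fin] at this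
      exact this.trans (Nat.mul_le_mul_right _ hcX)
    · refine Nat.mul_le_mul_right _ ((Finset.card_le_univ _).trans ?_)
      rw [Fintype.card_fun, Fintype.card_fin]
  have c3 : N ^ R ≤ R ^ 2 * (Bad.card * N ^ (R - 2)) + R ^ v * (cop.card * N ^ (R - v)) :=
    c0.trans ((Finset.card_union_le _ _).trans (Nat.add_le_add c1 c2))
  have hNr : (0:ℝ) < N := by exact_mod_cast hNpos
  have hRr : (0:ℝ) < R := by exact_mod_cast (by omega : 0 < R)
  have c4 : (N:ℝ) ^ R ≤ R ^ 2 * (Bad.card * N ^ (R - 2)) + R ^ v * (cop.card * N ^ (R - v)) := by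
    exact_mod_cast c3
  have c5 : (R:ℝ) ^ v * (cop.card * N ^ (R - v)) ≤ N ^ R / 2 := by
    calc (R:ℝ) ^ v * (cop.card * N ^ (R - v)) ≤
        R ^ v * (N ^ v / (2 * R ^ v) * N ^ (R - v)) := by gcongr
      _ = (N ^ v * N ^ (R - v)) / 2 := by field_simp
      _ = N ^ R / 2 := by rw [← pow_add, Nat.add_sub_cancel' hvR]
  have c6 : (N:ℝ) ^ 2 ≤ 2 * R ^ 2 * Bad.card := by
    have e : (N:ℝ) ^ R = N ^ 2 * N ^ (R - 2) := by rw [← pow_add, Nat.add_sub_cancel' hR2]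
    have hpos : (0:ℝ) < N ^ (R - 2) := by positivity
    rw [e] at c4 c5
    refine le_of_mul_le_mul_right ?_ hpos
    nlinarith
  set U := Finset.univ.filter (fun x : Fin N × Fin N => x.1 < x.2 ∧ x ∉ C ∧ x.swap ∉ C) with hU
  have c7 : Bad.card ≤ N + (U.card + U.card) := by
    have : Bad ⊆ (Finset.univ.image (fun x : Fin N => (x, x))) ∪ (U ∪ U.image Prod.swap) := by
      rintro ⟨x, y⟩ hx
      simp only [hBad, Finset.mem_filter, Finset.mem_univ, true_and, Prod.swap_prod_mk] at hx
      simp only [Finset.mem_union, Finset.mem_image, Finset.mem_univ, true_and, hU,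
        Finset.mem_filter, Prod.swap_prod_mk, Prod.exists, Prod.mk.injEq]
      by_cases hxy : x = y
      · left; exact ⟨x, rfl, hxy⟩
      · have hx' := hx.resolve_left hxy
        right
        rcases lt_or_gt_of_ne hxy with h | h
        · left; exact ⟨h, hx'⟩
        · right; exact ⟨y, x, ⟨h, hx'.2, hx'.1⟩, rfl, rfl⟩
    refine (Finset.card_le_card this).trans ((Finset.card_union_le _ _).trans ?_)
    refine Nat.add_le_add (Finset.card_image_le.trans (by simp)) ?_
    exact (Finset.card_union_le _ _).trans (Nat.add_le_add_left Finset.card_image_le _)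
  have c8 : (Bad.card : ℝ) ≤ N + (U.card + U.card) := by exact_mod_cast c7
  have hN4 : (4:ℝ) * R ^ 2 ≤ N := by exact_mod_cast hN
  rw [div_le_iff₀ (by positivity)]
  have hRR : (0:ℝ) < R ^ 2 := by positivity
  nlinarith [mul_le_mul_of_nonneg_left c8 hRR.le, mul_le_mul_of_nonneg_right hN4 hNr.le]

theorem det_container {β : Type*} [Fintype β] (F : β → β → Prop)
    (hor : ∀ a b, F a b → ¬ F b a) (hac : RelAcyclic F) :
    ∃ (K δ A : ℝ) (N0 : ℕ), 0 < K ∧ 0 < δ ∧ 1 ≤ A ∧ ∀ (N : ℕ) (q : ℝ), N0 ≤ N → 0 < q →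
      A * q ≤ 1 / 2 → 1 ≤ N * q ^ (m2Rel F) →
      ∃ C : Finset (Fin N × Fin N) → Finset (Fin N × Fin N), ∀ I : Finset (Fin N × Fin N),
        (∀ f : β → Fin N, Function.Injective f → ∃ a b, F a b ∧ (f a, f b) ∉ I) →
        ∃ S ⊆ I, (S.card : ℝ) ≤ K * q * (N : ℝ) ^ 2 ∧ I ⊆ C S ∧
          δ * (N : ℝ) ^ 2 ≤ ((Finset.univ.filter (fun x : Fin N × Fin N =>
            x.1 < x.2 ∧ x ∉ C S ∧ x.swap ∉ C S)).card : ℝ) := by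
  set v := Fintype.card β with hv
  set r := (arcs F).card with hr
  set R := 2 ^ (v + 1) with hR
  have hRpos : (0:ℝ) < R := by rw [hR]; positivity
  set A : ℝ := max 1 ((r:ℝ) ^ r * (((2:ℝ) ^ r) ^ r) * (2 * R ^ v)) with hA
  have hA1 : 1 ≤ A := le_max_left _ _
  refine ⟨r * (8 * A) + 1, 1 / (8 * R ^ 2), A, 4 * R ^ 2, by positivity, by positivity, hA1, ?_⟩
  intro N q hN hq hAq hNq
  have hNpos : 0 < N := lt_of_lt_of_le (by positivity) hN
  have hNr : (0:ℝ) < N := by exact_mod_cast hNpos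
  have hq1 : q ≤ 1 := by nlinarith
  obtain ⟨C, hC⟩ := container (V := Fin N × Fin N) (p := A * q) (q := q) (A := A)
    (D := (r:ℝ) ^ r * (N ^ v / N ^ 2)) hq hA1 (by positivity) rfl hAq r
    (Φ := {f : β → Fin N // Function.Injective f}) (fun f => earcs F f.1)
    (fun f => Finset.card_image_le)
    (fun J hJ => codeg F hor hNpos hq hq1 hNq J hJ)
  refine ⟨C, fun I hI => ?_⟩
  obtain ⟨S, hSI, hSc, hIC, hcop⟩ := hC I (by
    rintro ⟨f, hf⟩ hs
    obtain ⟨a, b, hab, hn⟩ := hI f hf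
    refine hn (hs ?_)
    simp only [earcs, arcs, Finset.mem_image, Finset.mem_filter, Finset.mem_univ, true_and]
    exact ⟨(a, b), hab, rfl⟩)
  have hVc : (Fintype.card (Fin N × Fin N) : ℝ) = (N:ℝ) ^ 2 := by
    rw [Fintype.card_prod, Fintype.card_fin, sq]; push_cast; ring
  rw [hVc] at hSc hcop
  refine ⟨S, hSI, hSc.trans ?_, hIC, ?_⟩
  · have : 0 ≤ q * (N:ℝ) ^ 2 := by positivity
    nlinarith
  · have := supersat F hac (le_of_eq hR.symm) hN (C S) (by
      refine (le_of_eq ?_).trans (hcop.trans ?_)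
      · congr!
      · have hAge : (r:ℝ) ^ r * (((2:ℝ) ^ r) ^ r) * (2 * R ^ v) ≤ A := le_max_right _ _
        have e : (r:ℝ) ^ r * ((N:ℝ) ^ v / N ^ 2) / A * (((2:ℝ) ^ r) ^ r * N ^ 2) =
            ((r:ℝ) ^ r * (((2:ℝ) ^ r) ^ r)) * N ^ v / A := by
          field_simp
        rw [e, div_le_div_iff₀ (by linarith) (by positivity)]
        have : (0:ℝ) ≤ N ^ v := by positivity
        nlinarith [mul_le_mul_of_nonneg_left hAge this])
    refine le_trans (le_of_eq (by ring)) this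

end

end HC
set_option linter.unusedSectionVars false

namespace HC

section
open Classical

/-- potential edges -/
abbrev PE (n : ℕ) := {e : Sym2 (Fin n) // ¬ e.IsDiag}

/-- graphs as sets of potential edges -/
noncomputable def graphEquiv (n : ℕ) : SimpleGraph (Fin n) ≃ Finset (PE n) where
  toFun G := Finset.univ.filter (fun e => e.1 ∈ G.edgeSet)
  invFun X := SimpleGraph.fromEdgeSet {e | ∃ h : ¬ e.IsDiag, (⟨e, h⟩ : PE n) ∈ X}
  left_inv G := by
    ext a b
    simp only [SimpleGraph.fromEdgeSet_adj]
    constructor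
    · rintro ⟨⟨h, h'⟩, -⟩
      simpa using h'
    · intro h
      refine ⟨⟨?_, ?_⟩, h.ne⟩
      · simpa using h.ne
      · simpa using h
  right_inv X := by
    ext ⟨e, he⟩
    simp only [Finset.mem_filter, Finset.mem_univ, true_and, SimpleGraph.edgeSet_fromEdgeSet]
    constructor
    · rintro ⟨⟨h, h'⟩, -⟩
      exact h'
    · intro h
      exact ⟨⟨he, h⟩, he⟩

lemma mem_graphEquiv {n : ℕ} (G : SimpleGraph (Fin n)) (e : PE n) :
    e ∈ graphEquiv n G ↔ e.1 ∈ G.edgeSet := by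
  simp [graphEquiv]

lemma card_PE (n : ℕ) : Fintype.card (PE n) = n.choose 2 := by
  rw [Sym2.card_subtype_not_diag, Fintype.card_fin]

lemma gw_eq {n : ℕ} (p : ℝ) (G : SimpleGraph (Fin n)) :
    p ^ G.edgeSet.ncard * (1 - p) ^ (n.choose 2 - G.edgeSet.ncard) = wt p (graphEquiv n G) := by
  have : G.edgeSet.ncard = (graphEquiv n G).card := by
    have h : G.edgeSet = (((graphEquiv n G).image Subtype.val : Finset (Sym2 (Fin n))) :
        Set (Sym2 (Fin n))) := by
      ext e
      simp only [Finset.coe_image, Set.mem_image, Finset.mem_coe, mem_graphEquiv]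
      constructor
      · intro he
        exact ⟨⟨e, G.not_isDiag_of_mem_edgeSet he⟩, he, rfl⟩
      · rintro ⟨e', h, rfl⟩
        exact h
    rw [h, Set.ncard_coe_finset, Finset.card_image_of_injective _ Subtype.val_injective]
  unfold wt
  rw [this, card_PE]

lemma probGnp_eq (n : ℕ) (p : ℝ) (Q : SimpleGraph (Fin n) → Prop) :
    probGnp n p Q = ∑ G : SimpleGraph (Fin n), if Q G then wt p (graphEquiv n G) else 0 := by
  unfold probGnp
  refine Finset.sum_congr rfl fun G _ => ?_
  rw [gw_eq]

lemma probGnp_true (n : ℕ) (p : ℝ) :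
    ∑ G : SimpleGraph (Fin n), wt p (graphEquiv n G) = 1 := by
  rw [← sum_wt (V := PE n) p]
  exact Fintype.sum_equiv (graphEquiv n) _ _ fun _ => rfl

lemma probGnp_compl (n : ℕ) (p : ℝ) (Q : SimpleGraph (Fin n) → Prop) :
    probGnp n p Q = 1 - probGnp n p (fun G => ¬ Q G) := by
  rw [probGnp_eq, probGnp_eq, ← probGnp_true n p, ← Finset.sum_sub_distrib]
  refine Finset.sum_congr rfl fun G _ => ?_
  by_cases h : Q G <;> simp [h]

lemma probGnp_nonneg (n : ℕ) {p : ℝ} (h0 : 0 ≤ p) (h1 : p ≤ 1) (Q : SimpleGraph (Fin n) → Prop) :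
    0 ≤ probGnp n p Q := by
  rw [probGnp_eq]
  exact Finset.sum_nonneg fun G _ => by split_ifs; exacts [wt_nonneg h0 h1 _, le_rfl]

lemma probGnp_union (n : ℕ) {p : ℝ} (h0 : 0 ≤ p) (h1 : p ≤ 1) {ι : Type*} (s : Finset ι)
    (Q : SimpleGraph (Fin n) → Prop) (P : ι → SimpleGraph (Fin n) → Prop)
    (h : ∀ G, Q G → ∃ i ∈ s, P i G) :
    probGnp n p Q ≤ ∑ i ∈ s, probGnp n p (P i) := by
  simp only [probGnp_eq]
  rw [Finset.sum_comm]
  refine Finset.sum_le_sum fun G _ => ?_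
  have hw := wt_nonneg h0 h1 (graphEquiv n G)
  have hnn : ∀ i ∈ s, 0 ≤ (if P i G then wt p (graphEquiv n G) else 0) :=
    fun i _ => by split_ifs; exacts [hw, le_rfl]
  by_cases hQ : Q G
  · obtain ⟨i, hi, hP⟩ := h G hQ
    have := Finset.single_le_sum hnn hi
    simpa [hQ, hP] using this
  · simp only [hQ, if_false]
    exact Finset.sum_nonneg hnn

lemma probGnp_cyl (n : ℕ) (p : ℝ) (S T : Finset (PE n)) (h : Disjoint S T) :
    probGnp n p (fun G => S ⊆ graphEquiv n G ∧ Disjoint T (graphEquiv n G)) =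
      p ^ S.card * (1 - p) ^ T.card := by
  rw [probGnp_eq, ← sum_supset_disj p S T h]
  refine Fintype.sum_equiv (graphEquiv n) _ _ fun G => ?_
  congr!

/-- edges of `Fin n` corresponding to a set of pairs in `Fin N` -/
noncomputable def es {N n : ℕ} (ι : Fin N → Fin n) (S : Finset (Fin N × Fin N)) : Finset (PE n) :=
  (S.image (fun x => s(ι x.1, ι x.2))).subtype (fun e => ¬ e.IsDiag)

lemma mem_es {N n : ℕ} (ι : Fin N → Fin n) (S : Finset (Fin N × Fin N)) (e : PE n) :
    e ∈ es ι S ↔ ∃ x ∈ S, s(ι x.1, ι x.2) = e.1 := by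
  simp only [es, Finset.mem_subtype, Finset.mem_image]

lemma card_es {N n : ℕ} (ι : Fin N → Fin n) (hι : Function.Injective ι)
    (S : Finset (Fin N × Fin N)) (hS : ∀ x ∈ S, x.1 ≠ x.2 ∧ x.swap ∉ S) :
    (es ι S).card = S.card := by
  unfold es
  rw [Finset.card_subtype, Finset.filter_true_of_mem, Finset.card_image_of_injOn]
  · rintro ⟨a, b⟩ hx ⟨c, d⟩ hy h
    simp only [Sym2.eq_iff] at h
    rcases h with ⟨h1, h2⟩ | ⟨h1, h2⟩
    · rw [hι h1, hι h2]
    · have := hι h1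
      have := hι h2
      subst_vars
      exact absurd hy (hS _ hx).2
  · intro e he
    obtain ⟨x, hx, rfl⟩ := Finset.mem_image.1 he
    simpa using fun h => (hS x hx).1 (hι h)

lemma sum_small {W : Type*} [Fintype W] [DecidableEq W] {p L s0 : ℝ} (h0 : 0 ≤ p) (hL : 0 ≤ L)
    (𝒮 : Finset (Finset W)) (h𝒮 : ∀ S ∈ 𝒮, (S.card : ℝ) ≤ s0) :
    ∑ S ∈ 𝒮, p ^ S.card ≤ Real.exp (L * s0 + Real.exp (-L) * p * Fintype.card W) := by
  have h1 : ∀ S ∈ 𝒮, p ^ S.card ≤ Real.exp (L * s0) * (Real.exp (-L) * p) ^ S.card := by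
    intro S hS
    have : (1:ℝ) ≤ Real.exp (L * s0) * Real.exp (-L) ^ S.card := by
      rw [← Real.exp_nat_mul, ← Real.exp_add]
      refine Real.one_le_exp ?_
      nlinarith [mul_le_mul_of_nonneg_left (h𝒮 S hS) hL]
    rw [mul_pow, ← mul_assoc]
    exact le_mul_of_one_le_left (by positivity) this
  have hx : 0 ≤ Real.exp (-L) * p := by positivity
  calc _ ≤ ∑ S ∈ 𝒮, Real.exp (L * s0) * (Real.exp (-L) * p) ^ S.card := Finset.sum_le_sum h1
    _ ≤ ∑ S : Finset W, Real.exp (L * s0) * (Real.exp (-L) * p) ^ S.card :=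
        Finset.sum_le_sum_of_subset_of_nonneg (Finset.subset_univ _) fun _ _ _ => by positivity
    _ = Real.exp (L * s0) * (Real.exp (-L) * p + 1) ^ Fintype.card W := by
        rw [← Finset.mul_sum]
        have := Finset.sum_pow_mul_eq_add_pow (Real.exp (-L) * p) 1 (Finset.univ : Finset W)
        simp only [one_pow, mul_one, Finset.powerset_univ, Finset.card_univ] at this
        rw [this]
    _ ≤ _ := by
        rw [Real.exp_add]
        refine mul_le_mul_of_nonneg_left ?_ (by positivity)
        calc (Real.exp (-L) * p + 1) ^ Fintype.card W ≤
            (Real.exp (Real.exp (-L) * p)) ^ Fintype.card W :=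
              pow_le_pow_left₀ (by positivity) (Real.add_one_le_exp _) _
          _ = _ := by rw [← Real.exp_nat_mul]; congr 1; ring

lemma prob_fail {β : Type*} [Fintype β] (F : β → β → Prop) {N n : ℕ} {K q δ p L : ℝ}
    (h0 : 0 ≤ p) (h1 : p ≤ 1) (hL : 0 ≤ L)
    (C : Finset (Fin N × Fin N) → Finset (Fin N × Fin N))
    (hC : ∀ I : Finset (Fin N × Fin N),
        (∀ f : β → Fin N, Function.Injective f → ∃ a b, F a b ∧ (f a, f b) ∉ I) →
        ∃ S ⊆ I, (S.card : ℝ) ≤ K * q * (N : ℝ) ^ 2 ∧ I ⊆ C S ∧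
          δ * (N : ℝ) ^ 2 ≤ ((Finset.univ.filter (fun x : Fin N × Fin N =>
            x.1 < x.2 ∧ x ∉ C S ∧ x.swap ∉ C S)).card : ℝ))
    (ι : Fin N → Fin n) (hι : Function.Injective ι) :
    probGnp n p (fun G => ¬ Arrows (G.comap ι) F) ≤
      Real.exp (L * (K * q * (N:ℝ) ^ 2) + Real.exp (-L) * p * (N:ℝ) ^ 2 - δ * p * (N:ℝ) ^ 2) := by
  set T : Finset (Fin N × Fin N) → Finset (Fin N × Fin N) := fun S =>
    Finset.univ.filter (fun x : Fin N × Fin N => x.1 < x.2 ∧ x ∉ C S ∧ x.swap ∉ C S) with hT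
  set 𝒮 : Finset (Finset (Fin N × Fin N)) := Finset.univ.filter (fun S =>
    (S.card : ℝ) ≤ K * q * (N : ℝ) ^ 2 ∧ S ⊆ C S ∧ δ * (N : ℝ) ^ 2 ≤ ((T S).card : ℝ) ∧
      ∀ x ∈ S, x.1 ≠ x.2 ∧ x.swap ∉ S) with h𝒮
  have hu := probGnp_union n h0 h1 𝒮 (fun G => ¬ Arrows (G.comap ι) F)
    (fun S G => es ι S ⊆ graphEquiv n G ∧ Disjoint (es ι (T S)) (graphEquiv n G)) (by
    intro G hG
    unfold Arrows at hG
    push Not at hG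
    obtain ⟨o, ho, hcopy⟩ := hG
    set I : Finset (Fin N × Fin N) := Finset.univ.filter (fun x => o x.1 x.2) with hI
    obtain ⟨S, hSI, hSc, hIC, hTc⟩ := hC I (by
      intro f hf
      by_contra hcon
      push Not at hcon
      refine hcopy ⟨f, hf, fun a b hab => ?_⟩
      simpa [hI] using hcon a b hab)
    have hSo : ∀ x ∈ S, o x.1 x.2 := fun x hx => by simpa [hI] using hSI hx
    refine ⟨S, ?_, ?_, ?_⟩
    · simp only [h𝒮, Finset.mem_filter, Finset.mem_univ, true_and]
      refine ⟨hSc, hSI.trans hIC, hTc, fun x hx => ?_⟩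
      have hadj := ho.1 _ _ (hSo x hx)
      refine ⟨hadj.ne, fun hsw => ?_⟩
      exact (ho.2 _ _ hadj).1 (hSo x hx) (hSo _ hsw)
    · intro e he
      obtain ⟨x, hx, hxe⟩ := (mem_es _ _ _).1 he
      rw [mem_graphEquiv, ← hxe]
      exact ho.1 _ _ (hSo x hx)
    · rw [Finset.disjoint_left]
      intro e he heG
      obtain ⟨x, hx, hxe⟩ := (mem_es _ _ _).1 he
      rw [mem_graphEquiv, ← hxe] at heG
      have hadj : (G.comap ι).Adj x.1 x.2 := heG
      simp only [hT, Finset.mem_filter, Finset.mem_univ, true_and] at hx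
      by_cases hxo : o x.1 x.2
      · exact hx.2.1 (hIC (by simpa [hI] using hxo))
      · have : o x.2 x.1 := by
          have := ho.2 _ _ hadj
          tauto
        exact hx.2.2 (hIC (by simpa [hI] using this)))
  refine hu.trans ?_
  have hterm : ∀ S ∈ 𝒮, probGnp n p (fun G => es ι S ⊆ graphEquiv n G ∧
      Disjoint (es ι (T S)) (graphEquiv n G)) ≤ p ^ S.card * Real.exp (-(δ * p * (N:ℝ) ^ 2)) := by
    intro S hS
    simp only [h𝒮, Finset.mem_filter, Finset.mem_univ, true_and] at hS
    obtain ⟨-, hSC, hTc, hanti⟩ := hS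
    have hTanti : ∀ x ∈ T S, x.1 ≠ x.2 ∧ x.swap ∉ T S := by
      intro x hx
      simp only [hT, Finset.mem_filter, Finset.mem_univ, true_and] at hx ⊢
      refine ⟨hx.1.ne, fun h => ?_⟩
      exact lt_asymm hx.1 h.1
    rw [probGnp_cyl, card_es ι hι S hanti, card_es ι hι _ hTanti]
    · refine mul_le_mul_of_nonneg_left ?_ (by positivity)
      calc (1 - p) ^ (T S).card ≤ (Real.exp (-p)) ^ (T S).card := by
            refine pow_le_pow_left₀ (by linarith) ?_ _
            have := Real.add_one_le_exp (-p)
            linarith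
        _ = Real.exp (-(p * (T S).card)) := by rw [← Real.exp_nat_mul]; congr 1; ring
        _ ≤ _ := by
            refine Real.exp_le_exp.2 ?_
            nlinarith [mul_le_mul_of_nonneg_left hTc h0]
    · rw [Finset.disjoint_left]
      intro e he he'
      obtain ⟨x, hx, hxe⟩ := (mem_es _ _ _).1 he
      obtain ⟨y, hy, hye⟩ := (mem_es _ _ _).1 he'
      simp only [hT, Finset.mem_filter, Finset.mem_univ, true_and] at hy
      have := hxe.trans hye.symm
      rw [Sym2.eq_iff] at this
      rcases this with ⟨a, b⟩ | ⟨a, b⟩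
      · have : x = y := Prod.ext (hι a) (hι b)
        subst this
        exact hy.2.1 (hSC hx)
      · have : x = y.swap := Prod.ext (hι a) (hι b)
        subst this
        exact hy.2.2 (hSC hx)
  refine (Finset.sum_le_sum hterm).trans ?_
  rw [← Finset.sum_mul, sub_eq_add_neg, Real.exp_add _ (-(δ * p * (N:ℝ) ^ 2))]
  refine mul_le_mul_of_nonneg_right ?_ (by positivity)
  have := sum_small (W := Fin N × Fin N) h0 hL 𝒮 (s0 := K * q * (N : ℝ) ^ 2) (by
    intro S hS
    simp only [h𝒮, Finset.mem_filter, Finset.mem_univ, true_and] at hS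
    exact hS.1)
  refine this.trans (le_of_eq ?_)
  rw [Fintype.card_prod, Fintype.card_fin]
  congr 2
  push_cast
  ring

lemma arrows_induce {β : Type*} (F : β → β → Prop) {N n : ℕ} (G : SimpleGraph (Fin n))
    (W : Finset (Fin n)) (ι : Fin N → Fin n) (hι : Function.Injective ι) (hW : ∀ x, ι x ∈ W)
    (h : Arrows (G.comap ι) F) : Arrows (SimpleGraph.induce (W : Set (Fin n)) G) F := by
  intro o ho
  obtain ⟨f, hf, hF⟩ := h (fun x y => o ⟨ι x, hW x⟩ ⟨ι y, hW y⟩)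
    ⟨fun u v huv => ho.1 _ _ huv, fun u v huv => ho.2 _ _ huv⟩
  refine ⟨fun b => ⟨ι (f b), hW _⟩, ?_, fun a b hab => hF a b hab⟩
  intro a b hab
  exact hf (hι (congrArg Subtype.val hab))

end

end HC

open Filter in
/-- For acyclic `F⃗` with `m₂(F⃗) > 1` and `0 < γ < 1` there is a constant `B ≥ 1` such
that, with `p = B·n^{-(1-γ)/m₂(F⃗)}`, a.a.s. `G(n,p)[W] → F⃗` for every
`W ⊆ V(G)` with `|W| ≥ n^{1-γ}`. -/
theorem stmt13 {β : Type*} [Fintype β] (F : β → β → Prop)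
    (hor : ∀ a b, F a b → ¬ F b a) (hacyclic : RelAcyclic F)
    (hm : 1 < m2Rel F) (γ : ℝ) (hγ0 : 0 < γ) (hγ1 : γ < 1) :
    ∃ B : ℝ, 1 ≤ B ∧
      Tendsto (fun n : ℕ => probGnp n (B * (n : ℝ) ^ (-((1 - γ) / m2Rel F)))
        (fun G => ∀ W : Finset (Fin n), (n : ℝ) ^ (1 - γ) ≤ (W.card : ℝ) →
          Arrows (SimpleGraph.induce (W : Set (Fin n)) G) F))
        atTop (nhds 1) := by
  classical
  obtain ⟨K, δ, A, N0, hK, hδ, hA, hdet⟩ := HC.det_container F hor hacyclic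
  set m := m2Rel F with hmdef
  set L : ℝ := max 0 (Real.log (4 / δ)) with hLdef
  have hL : 0 ≤ L := le_max_left _ _
  have hLδ : Real.exp (-L) ≤ δ / 4 := by
    have h1 : Real.log (4 / δ) ≤ L := le_max_right _ _
    have h2 : -L ≤ Real.log (δ / 4) := by
      have : Real.log (δ / 4) = - Real.log (4 / δ) := by rw [← Real.log_inv, inv_div]
      rw [this]; linarith
    calc Real.exp (-L) ≤ Real.exp (Real.log (δ / 4)) := Real.exp_le_exp.2 h2
      _ = δ / 4 := Real.exp_log (by positivity)
  set B : ℝ := max 1 (4 * K * L / δ) with hBdef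
  have hB1 : 1 ≤ B := le_max_left _ _
  have hBL : L * K ≤ δ / 4 * B := by
    have : 4 * K * L / δ ≤ B := le_max_right _ _
    rw [div_le_iff₀ hδ] at this
    linarith
  refine ⟨B, hB1, ?_⟩
  have hc : 0 < (1 - γ) / m := div_pos (by linarith) (by linarith)
  have hc2 : 0 < (1 - γ) - (1 - γ) / m := by
    have : (1 - γ) / m < 1 - γ := div_lt_self (by linarith) hm
    linarith
  have hcast : Tendsto (fun n : ℕ => (n : ℝ)) atTop atTop := tendsto_natCast_atTop_atTop
  have hq0 : Tendsto (fun n : ℕ => (n : ℝ) ^ (-((1 - γ) / m))) atTop (nhds 0) :=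
    (tendsto_rpow_neg_atTop hc).comp hcast
  have hN0 : Tendsto (fun n : ℕ => (n : ℝ) ^ (1 - γ)) atTop atTop :=
    (tendsto_rpow_atTop (by linarith)).comp hcast
  have hlog : ∀ᶠ n : ℕ in atTop, Real.log n ≤ δ / 4 * (n:ℝ) ^ ((1 - γ) - (1 - γ) / m) := by
    have h := (isLittleO_log_rpow_atTop hc2).bound (show 0 < δ / 4 by positivity)
    have h' := hcast.eventually h
    filter_upwards [h', eventually_ge_atTop 1] with n hn hn1
    refine (le_abs_self _).trans ?_
    rw [Real.norm_eq_abs, Real.norm_eq_abs, abs_of_nonneg (a := (n:ℝ) ^ _) (by positivity)] at hn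
    exact hn
  have hmain : ∀ᶠ n : ℕ in atTop,
      0 ≤ probGnp n (B * (n : ℝ) ^ (-((1 - γ) / m))) (fun G => ¬ ∀ W : Finset (Fin n),
        (n : ℝ) ^ (1 - γ) ≤ (W.card : ℝ) →
          Arrows (SimpleGraph.induce (W : Set (Fin n)) G) F) ∧
      probGnp n (B * (n : ℝ) ^ (-((1 - γ) / m))) (fun G => ¬ ∀ W : Finset (Fin n),
        (n : ℝ) ^ (1 - γ) ≤ (W.card : ℝ) →
          Arrows (SimpleGraph.induce (W : Set (Fin n)) G) F) ≤ (n : ℝ)⁻¹ := by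
    filter_upwards [eventually_ge_atTop 1, hlog, hN0.eventually_ge_atTop (N0 : ℝ),
      hq0.eventually_le_const (show (0:ℝ) < 1 / (2 * A) by positivity),
      hq0.eventually_le_const (show (0:ℝ) < 1 / B by positivity)] with n hn hlogn hNn hqA hqB
    have hnr : (1:ℝ) ≤ n := by exact_mod_cast hn
    have hnpos : (0:ℝ) < n := by linarith
    set q : ℝ := (n : ℝ) ^ (-((1 - γ) / m)) with hq
    have hqpos : 0 < q := Real.rpow_pos_of_pos hnpos _
    set p : ℝ := B * q with hp
    have hp0 : 0 ≤ p := by positivity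
    have hp1 : p ≤ 1 := by
      rw [le_div_iff₀ (by linarith)] at hqB
      linarith
    refine ⟨HC.probGnp_nonneg n hp0 hp1 _, ?_⟩
    set N : ℕ := ⌈(n:ℝ) ^ (1 - γ)⌉₊ with hN
    have hNge : (n:ℝ) ^ (1 - γ) ≤ N := Nat.le_ceil _
    have hx1 : (1:ℝ) ≤ (n:ℝ) ^ (1 - γ) := Real.one_le_rpow hnr (by linarith)
    have hN1 : (1:ℝ) ≤ N := hx1.trans hNge
    have hNN0 : N0 ≤ N := by exact_mod_cast hNn.trans hNge
    have hqm : q ^ m = (n:ℝ) ^ (-(1 - γ)) := by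
      rw [hq, ← Real.rpow_mul hnpos.le]
      congr 1
      field_simp
    obtain ⟨C, hC⟩ := hdet N q hNN0 hqpos (by
        rw [le_div_iff₀ (by positivity)] at hqA
        linarith) (by
        rw [hqm]
        calc (1:ℝ) = (n:ℝ) ^ (1 - γ) * (n:ℝ) ^ (-(1 - γ)) := by
              rw [← Real.rpow_add hnpos]; simp
          _ ≤ _ := mul_le_mul_of_nonneg_right hNge (by positivity))
    have hun := HC.probGnp_union n hp0 hp1
      (Finset.univ.filter (fun ι : Fin N → Fin n => Function.Injective ι))
      (fun G => ¬ ∀ W : Finset (Fin n), (n : ℝ) ^ (1 - γ) ≤ (W.card : ℝ) →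
          Arrows (SimpleGraph.induce (W : Set (Fin n)) G) F)
      (fun ι G => ¬ Arrows (G.comap ι) F) (by
        intro G hG
        push Not at hG
        obtain ⟨W, hW, hnA⟩ := hG
        have hNW : N ≤ W.card := Nat.ceil_le.2 hW
        obtain ⟨W', hW'W, hW'c⟩ := Finset.exists_subset_card_eq hNW
        refine ⟨fun i => W'.orderEmbOfFin hW'c i, ?_, fun hAr => hnA ?_⟩
        · simp only [Finset.mem_filter, Finset.mem_univ, true_and]
          exact (W'.orderEmbOfFin hW'c).injective
        · exact HC.arrows_induce F G W _ (W'.orderEmbOfFin hW'c).injective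
            (fun x => hW'W (Finset.orderEmbOfFin_mem _ _ _)) hAr)
    refine hun.trans ?_
    have hbound : ∀ ι ∈ (Finset.univ.filter (fun ι : Fin N → Fin n => Function.Injective ι)),
        probGnp n p (fun G => ¬ Arrows (G.comap ι) F) ≤ Real.exp (-(δ / 2 * p * (N:ℝ) ^ 2)) := by
      intro ι hι
      simp only [Finset.mem_filter, Finset.mem_univ, true_and] at hι
      refine (HC.prob_fail F hp0 hp1 hL C hC ι hι).trans (Real.exp_le_exp.2 ?_)
      have hqN : 0 ≤ q * (N:ℝ) ^ 2 := by positivity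
      have hpN : 0 ≤ p * (N:ℝ) ^ 2 := by positivity
      have e1 : L * (K * q * (N:ℝ) ^ 2) ≤ δ / 4 * (p * (N:ℝ) ^ 2) := by
        have := mul_le_mul_of_nonneg_right hBL hqN
        rw [hp]
        linarith
      have e2 : Real.exp (-L) * p * (N:ℝ) ^ 2 ≤ δ / 4 * (p * (N:ℝ) ^ 2) := by
        have := mul_le_mul_of_nonneg_right hLδ hpN
        linarith
      linarith
    refine (Finset.sum_le_card_nsmul _ _ _ hbound).trans ?_
    have hcardι : ((Finset.univ.filter (fun ι : Fin N → Fin n => Function.Injective ι)).card : ℝ) ≤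
        Real.exp (N * Real.log n) := by
      have : (Finset.univ.filter (fun ι : Fin N → Fin n => Function.Injective ι)).card ≤ n ^ N := by
        refine (Finset.card_le_univ _).trans ?_
        rw [Fintype.card_fun, Fintype.card_fin, Fintype.card_fin]
      rw [Real.exp_nat_mul, Real.exp_log hnpos]
      exact_mod_cast this
    rw [nsmul_eq_mul]
    refine (mul_le_mul_of_nonneg_right hcardι (Real.exp_pos _).le).trans ?_
    rw [← Real.exp_add]
    have hlast : (n:ℝ)⁻¹ = Real.exp (- Real.log n) := by
      rw [Real.exp_neg, Real.exp_log hnpos]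
    rw [hlast]
    refine Real.exp_le_exp.2 ?_
    have hlog0 : 0 ≤ Real.log n := Real.log_nonneg hnr
    have hpN : (n:ℝ) ^ ((1 - γ) - (1 - γ) / m) ≤ p * N := by
      calc (n:ℝ) ^ ((1 - γ) - (1 - γ) / m) = q * (n:ℝ) ^ (1 - γ) := by
            rw [hq, ← Real.rpow_add hnpos]; congr 1; ring
        _ ≤ q * N := mul_le_mul_of_nonneg_left hNge hqpos.le
        _ ≤ p * N := by
            refine mul_le_mul_of_nonneg_right ?_ (by positivity)
            rw [hp]; exact le_mul_of_one_le_left hqpos.le hB1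
    have h2 : 2 * Real.log n ≤ δ / 2 * (p * N) := by
      have := mul_le_mul_of_nonneg_left hpN (show 0 ≤ δ / 4 by positivity)
      linarith
    have h3 := mul_le_mul_of_nonneg_left h2 (show (0:ℝ) ≤ N by positivity)
    have h4 := mul_le_mul_of_nonneg_right hN1 hlog0
    nlinarith
  have hlim : Tendsto (fun n : ℕ => probGnp n (B * (n : ℝ) ^ (-((1 - γ) / m)))
      (fun G => ¬ ∀ W : Finset (Fin n), (n : ℝ) ^ (1 - γ) ≤ (W.card : ℝ) →
          Arrows (SimpleGraph.induce (W : Set (Fin n)) G) F)) atTop (nhds 0) :=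
    tendsto_of_tendsto_of_tendsto_of_le_of_le' tendsto_const_nhds
      (tendsto_inv_atTop_zero.comp hcast)
      (hmain.mono fun n h => h.1) (hmain.mono fun n h => h.2)
  have := hlim.const_sub 1
  rw [sub_zero] at this
  refine this.congr fun n => ?_
  exact (HC.probGnp_compl n _ _).symm
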